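/- Let A ⊆ 𝔽_p with 0 ∉ A and |A|^{11}·|A+A| ≤ p^8. Then the third multiplicative energy E₃ˣ(A) = #{(a₁,a₂,a₃,a₁',a₂',a₃') ∈ A⁶ : a₁/a₁' = a₂/a₂' = a₃/a₃'} satisfies E₃ˣ(A) ≪ |A+A|^{15/4}·|A|^{−3/4}·log|A|. -/

import Mathlib

open Finset Pointwise

section Rud
variable {K : Type*} [Field K]

/-- restriction to an `r`-line -/
noncomputable def resR (j : K × K × K) : MvPolynomial (Fin 3) K →ₐ[K] Polynomial K :=
  MvPolynomial.aeval ![Polynomial.C j.2.1 + Polynomial.C j.2.2 * Polynomial.X,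
    Polynomial.C j.1, Polynomial.X]

/-- restriction to an `l`-line -/
noncomputable def resL (i : K × K × K) : MvPolynomial (Fin 3) K →ₐ[K] Polynomial K :=
  MvPolynomial.aeval ![Polynomial.C i.2.1 + Polynomial.C i.2.2 * Polynomial.X,
    Polynomial.X, Polynomial.C i.1]

/-- incidence relation -/
def incR (i j : K × K × K) : Prop := i.2.1 + i.2.2 * j.1 = j.2.1 + j.2.2 * i.1

theorem lin_natDegree (a b : K) :
    (Polynomial.C a + Polynomial.C b * Polynomial.X).natDegree ≤ 1 := by
  rw [add_comm]; exact Polynomial.natDegree_linear_le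

theorem resR_natDegree (j : K × K × K) (f : MvPolynomial (Fin 3) K) :
    (resR j f).natDegree ≤ f.totalDegree := by
  have := MvPolynomial.aeval_natDegree_le (m := f.totalDegree) (n := 1) f le_rfl
    ![Polynomial.C j.2.1 + Polynomial.C j.2.2 * Polynomial.X,
    Polynomial.C j.1, Polynomial.X] (by
      intro i; fin_cases i
      · exact lin_natDegree _ _
      · simp
      · simp)
  simpa [resR] using this

theorem resL_natDegree (j : K × K × K) (f : MvPolynomial (Fin 3) K) :
    (resL j f).natDegree ≤ f.totalDegree := by
  have := MvPolynomial.aeval_natDegree_le (m := f.totalDegree) (n := 1) f le_rfl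
    ![Polynomial.C j.2.1 + Polynomial.C j.2.2 * Polynomial.X,
    Polynomial.X, Polynomial.C j.1] (by
      intro i; fin_cases i
      · exact lin_natDegree _ _
      · simp
      · simp)
  simpa [resL] using this

theorem resR_eval (j : K × K × K) (f : MvPolynomial (Fin 3) K) (t : K) :
    (resR j f).eval t = MvPolynomial.eval ![j.2.1 + j.2.2 * t, j.1, t] f := by
  have : ((Polynomial.aeval t).comp (resR j)) =
      MvPolynomial.aeval ![j.2.1 + j.2.2 * t, j.1, t] := by
    apply MvPolynomial.algHom_ext
    intro i; fin_cases i <;> simp [resR]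
  have h2 := DFunLike.congr_fun this f
  simpa [MvPolynomial.aeval_eq_eval, Polynomial.aeval_def, Polynomial.eval₂_eq_eval_map] using h2

theorem resL_eval (j : K × K × K) (f : MvPolynomial (Fin 3) K) (t : K) :
    (resL j f).eval t = MvPolynomial.eval ![j.2.1 + j.2.2 * t, t, j.1] f := by
  have : ((Polynomial.aeval t).comp (resL j)) =
      MvPolynomial.aeval ![j.2.1 + j.2.2 * t, t, j.1] := by
    apply MvPolynomial.algHom_ext
    intro i; fin_cases i <;> simp [resL]
  have h2 := DFunLike.congr_fun this f
  simpa [MvPolynomial.aeval_eq_eval, Polynomial.aeval_def, Polynomial.eval₂_eq_eval_map] using h2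

/-- at an incidence the two restrictions agree -/
theorem inc_eval {i j : K × K × K} (h : incR i j) (f : MvPolynomial (Fin 3) K) :
    (resR j f).eval i.1 = (resL i f).eval j.1 := by
  rw [resR_eval, resL_eval]
  unfold incR at h
  rw [h]

/-- counting incidences on an r-line not in a surface -/
theorem count_on_r [DecidableEq K] (f : MvPolynomial (Fin 3) K) (j : K × K × K) (hj : resR j f ≠ 0)
    (I : Finset (K × K × K)) (hI : Set.InjOn (fun i : K × K × K => i.1) I)
    (h : ∀ i ∈ I, incR i j ∧ resL i f = 0) : I.card ≤ f.totalDegree := by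
  have h1 : (I.image (fun i : K × K × K => i.1)).card = I.card := Finset.card_image_of_injOn hI
  rw [← h1]
  refine le_trans ?_ (resR_natDegree j f)
  apply Polynomial.card_le_degree_of_subset_roots
  intro t ht
  rw [Finset.mem_val, Finset.mem_image] at ht
  obtain ⟨i, hi, rfl⟩ := ht
  rw [Polynomial.mem_roots hj, Polynomial.IsRoot, inc_eval (h i hi).1, (h i hi).2]
  simp

theorem count_on_l [DecidableEq K] (f : MvPolynomial (Fin 3) K) (i : K × K × K) (hi : resL i f ≠ 0)
    (J : Finset (K × K × K)) (hJ : Set.InjOn (fun i : K × K × K => i.1) J)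
    (h : ∀ j ∈ J, incR i j ∧ resR j f = 0) : J.card ≤ f.totalDegree := by
  have h1 : (J.image (fun i : K × K × K => i.1)).card = J.card := Finset.card_image_of_injOn hJ
  rw [← h1]
  refine le_trans ?_ (resL_natDegree i f)
  apply Polynomial.card_le_degree_of_subset_roots
  intro t ht
  rw [Finset.mem_val, Finset.mem_image] at ht
  obtain ⟨j, hj, rfl⟩ := ht
  rw [Polynomial.mem_roots hi, Polynomial.IsRoot, ← inc_eval (h j hj).1, (h j hj).2]
  simp

/-- a polynomial in (y,z) vanishing on many lines y = const -/
theorem two_var_count [DecidableEq K] (R : MvPolynomial (Fin 2) K) (hR : R ≠ 0)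
    (Y : Finset K)
    (h : ∀ y ∈ Y, MvPolynomial.aeval ![Polynomial.C y, (Polynomial.X : Polynomial K)] R = 0) :
    Y.card ≤ R.totalDegree := by
  -- view as polynomial in y over K[z]
  let e : MvPolynomial (Fin 2) K ≃ₐ[K] Polynomial (MvPolynomial (Fin 1) K) :=
    MvPolynomial.finSuccEquiv K 1
  have hdeg : (e R).natDegree ≤ R.totalDegree := by
    rw [MvPolynomial.natDegree_finSuccEquiv]
    exact MvPolynomial.degreeOf_le_totalDegree _ _
  have he : e R ≠ 0 := by simpa using hR
  refine le_trans ?_ hdeg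
  have hinj : Function.Injective (fun y : K => (MvPolynomial.C y : MvPolynomial (Fin 1) K)) :=
    MvPolynomial.C_injective _ _
  classical
  rw [← Finset.card_image_of_injective Y hinj]
  apply Polynomial.card_le_degree_of_subset_roots
  intro t ht
  rw [Finset.mem_val, Finset.mem_image] at ht
  obtain ⟨y, hy, rfl⟩ := ht
  rw [Polynomial.mem_roots he, Polynomial.IsRoot]
  -- compare with evaluation
  let φ : MvPolynomial (Fin 1) K →ₐ[K] Polynomial K := MvPolynomial.aeval ![Polynomial.X]
  have hφ : Function.Injective φ := by
    let ψ : Polynomial K →ₐ[K] MvPolynomial (Fin 1) K := Polynomial.aeval (MvPolynomial.X 0)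
    have : ψ.comp φ = AlgHom.id K _ := by
      apply MvPolynomial.algHom_ext
      intro i; fin_cases i; simp [φ, ψ]
    intro a b hab
    have h1 := DFunLike.congr_fun this a
    have h2 := DFunLike.congr_fun this b
    simp only [AlgHom.comp_apply, AlgHom.id_apply] at h1 h2
    rw [← h1, ← h2, hab]
  apply hφ
  rw [map_zero, ← h y hy]
  have : ((φ.comp ((Polynomial.aeval (MvPolynomial.C y : MvPolynomial (Fin 1) K)).restrictScalars K)).comp
      (e : MvPolynomial (Fin 2) K →ₐ[K] Polynomial (MvPolynomial (Fin 1) K))) =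
      MvPolynomial.aeval ![Polynomial.C y, (Polynomial.X : Polynomial K)] := by
    apply MvPolynomial.algHom_ext
    intro i; fin_cases i
    · simp [e, φ, MvPolynomial.finSuccEquiv_X_zero]
    · have hX : MvPolynomial.finSuccEquiv K 1 (MvPolynomial.X 1) = Polynomial.C (MvPolynomial.X 0) :=
        MvPolynomial.finSuccEquiv_X_succ (j := 0)
      simp [e, φ, hX]
  have h2 := DFunLike.congr_fun this R
  rw [← h2]
  simp [Polynomial.aeval_def, Polynomial.eval₂_eq_eval_map]

theorem totalDegree_det_aux {σ : Type*} {m n : ℕ} {d e : ℕ}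
    (M : Matrix (Fin (m + n)) (Fin (m + n)) (MvPolynomial σ K))
    (h1 : ∀ i, ∀ j : Fin m, (M i (Fin.castAdd n j)).totalDegree ≤ e)
    (h2 : ∀ i, ∀ j : Fin n, (M i (Fin.natAdd m j)).totalDegree ≤ d) :
    M.det.totalDegree ≤ m * e + n * d := by
  rw [Matrix.det_apply]
  apply MvPolynomial.totalDegree_finsetSum_le
  intro σ _
  have : (Equiv.Perm.sign σ • ∏ i, M (σ i) i).totalDegree ≤ (∏ i, M (σ i) i).totalDegree := by
    rcases Int.units_eq_one_or (Equiv.Perm.sign σ) with h | h <;> simp [h]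
  refine this.trans ((MvPolynomial.totalDegree_finsetProd _ _).trans ?_)
  rw [Fin.sum_univ_add]
  apply add_le_add
  · refine (Finset.sum_le_sum (fun j _ => h1 _ j)).trans ?_
    simp
  · refine (Finset.sum_le_sum (fun j _ => h2 _ j)).trans ?_
    simp

/-- Elimination -/
theorem elim_exists (f g : MvPolynomial (Fin 3) K) (hf : Irreducible f)
    (hx : f.degreeOf 0 ≠ 0) (hfg : ¬ f ∣ g) :
    ∃ R : MvPolynomial (Fin 2) K, R ≠ 0 ∧ R.totalDegree ≤ 2 * f.totalDegree * g.totalDegree ∧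
      ∃ u v : MvPolynomial (Fin 3) K, f * u + g * v = MvPolynomial.rename Fin.succ R := by
  let e : MvPolynomial (Fin 3) K ≃ₐ[K] Polynomial (MvPolynomial (Fin 2) K) :=
    MvPolynomial.finSuccEquiv K 2
  have hfe : Irreducible (e f) := (MulEquiv.irreducible_iff e).2 hf
  have hdf : (e f).natDegree = f.degreeOf 0 := MvPolynomial.natDegree_finSuccEquiv f
  have hdg : (e g).natDegree = g.degreeOf 0 := MvPolynomial.natDegree_finSuccEquiv g
  have hprim : (e f).IsPrimitive := hfe.isPrimitive (by rw [hdf]; exact hx)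
  have hne : (e f).resultant (e g) ≠ 0 := by
    intro h0
    let L := FractionRing (MvPolynomial (Fin 2) K)
    have hinj : Function.Injective (algebraMap (MvPolynomial (Fin 2) K) L) :=
      IsFractionRing.injective _ _
    have h1 := Polynomial.resultant_map_map (e f) (e g) (e f).natDegree (e g).natDegree
      (algebraMap (MvPolynomial (Fin 2) K) L)
    rw [h0, map_zero] at h1
    have h2 : ((e f).map (algebraMap (MvPolynomial (Fin 2) K) L)).resultant
      ((e g).map (algebraMap (MvPolynomial (Fin 2) K) L)) = 0 := by
      rw [Polynomial.natDegree_map_eq_of_injective hinj, Polynomial.natDegree_map_eq_of_injective hinj]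
      exact h1
    rw [Polynomial.resultant_eq_zero_iff] at h2
    have h3 : Irreducible ((e f).map (algebraMap (MvPolynomial (Fin 2) K) L)) :=
      (hprim.irreducible_iff_irreducible_map_fraction_map).1 hfe
    have h4 : ((e f).map (algebraMap (MvPolynomial (Fin 2) K) L)) ∣
        ((e g).map (algebraMap (MvPolynomial (Fin 2) K) L)) := by
      by_contra hnd
      exact h2.2 (h3.coprime_iff_not_dvd.2 hnd)
    have h5 := hprim.dvd_of_fraction_map_dvd_fraction_map h4
    exact hfg ((map_dvd_iff e).1 h5)
  refine ⟨(e f).resultant (e g), hne, ?_, ?_⟩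
  · have hc : ∀ (h : MvPolynomial (Fin 3) K) (k : ℕ), ((e h).coeff k).totalDegree ≤ h.totalDegree := by
      intro h k
      by_cases h0 : (e h).coeff k = 0
      · simp [h0]
      · have := MvPolynomial.totalDegree_coeff_finSuccEquiv_add_le h k h0
        exact le_trans (Nat.le_add_right _ _) this
    have := totalDegree_det_aux (d := f.totalDegree) (e := g.totalDegree)
      (Polynomial.sylvester (e f) (e g) (e f).natDegree (e g).natDegree)
      (by
        intro i j
        simp only [Polynomial.sylvester, Matrix.of_apply, Fin.addCases_left]
        split_ifs
        · exact hc _ _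
        · simp)
      (by
        intro i j
        simp only [Polynomial.sylvester, Matrix.of_apply, Fin.addCases_right]
        split_ifs
        · exact hc _ _
        · simp)
    refine this.trans ?_
    have a1 : (e f).natDegree ≤ f.totalDegree := by
      rw [hdf]; exact MvPolynomial.degreeOf_le_totalDegree _ _
    have a2 : (e g).natDegree ≤ g.totalDegree := by
      rw [hdg]; exact MvPolynomial.degreeOf_le_totalDegree _ _
    nlinarith [Nat.mul_le_mul_right g.totalDegree a1, Nat.mul_le_mul_right f.totalDegree a2]
  · obtain ⟨u, v, -, -, huv⟩ := Polynomial.exists_mul_add_mul_eq_C_resultant (e f) (e g) le_rfl le_rfl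
      (Or.inl (by rw [hdf]; exact hx))
    refine ⟨e.symm u, e.symm v, ?_⟩
    apply e.injective
    rw [map_add, map_mul, map_mul, AlgEquiv.apply_symm_apply, AlgEquiv.apply_symm_apply, huv]
    have : (e : MvPolynomial (Fin 3) K →ₐ[K] Polynomial (MvPolynomial (Fin 2) K)).comp
        (MvPolynomial.rename Fin.succ) = Polynomial.CAlgHom := by
      apply MvPolynomial.algHom_ext
      intro i
      simp [e, MvPolynomial.finSuccEquiv_X_succ]
    exact (DFunLike.congr_fun this _).symm

theorem resR_rename (j : K × K × K) (R : MvPolynomial (Fin 2) K) :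
    resR j (MvPolynomial.rename Fin.succ R) =
      MvPolynomial.aeval ![Polynomial.C j.1, (Polynomial.X : Polynomial K)] R := by
  have : (resR j).comp (MvPolynomial.rename Fin.succ) =
     MvPolynomial.aeval ![Polynomial.C j.1, (Polynomial.X : Polynomial K)] := by
    apply MvPolynomial.algHom_ext
    intro i; fin_cases i
    · simp [resR]
    · simp [resR]
  exact DFunLike.congr_fun this R

theorem rename_count [DecidableEq K] (R : MvPolynomial (Fin 2) K) (hR : R ≠ 0)
    (J : Finset (K × K × K)) (hJ : Set.InjOn (fun i : K × K × K => i.1) J)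
    (h : ∀ j ∈ J, resR j (MvPolynomial.rename Fin.succ R) = 0) :
    J.card ≤ R.totalDegree := by
  rw [← Finset.card_image_of_injOn hJ]
  apply two_var_count R hR
  intro y hy
  rw [Finset.mem_image] at hy
  obtain ⟨j, hj, rfl⟩ := hy
  rw [← resR_rename]
  exact h j hj

theorem bez_count [DecidableEq K] (f g : MvPolynomial (Fin 3) K) (hf : Irreducible f)
    (hx : f.degreeOf 0 ≠ 0) (hfg : ¬ f ∣ g)
    (J : Finset (K × K × K)) (hJ : Set.InjOn (fun i : K × K × K => i.1) J)
    (h : ∀ j ∈ J, resR j f = 0 ∧ resR j g = 0) :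
    J.card ≤ 2 * f.totalDegree * g.totalDegree := by
  obtain ⟨R, hR, hd, u, v, huv⟩ := elim_exists f g hf hx hfg
  refine (rename_count R hR J hJ ?_).trans hd
  intro j hj
  rw [← huv, map_add, map_mul, map_mul, (h j hj).1, (h j hj).2]
  simp

end Rud

section Rud
variable {K : Type*} [Field K]

/-- Coefficientwise extension of a derivation. -/
theorem exists_coeff_der {A : Type*} [CommRing A] (D : Derivation ℤ A A) :
    ∃ E : Polynomial A → Polynomial A, (∀ a b, E (a + b) = E a + E b) ∧
      (∀ a b, E (a * b) = a * E b + b * E a) ∧ (∀ a, E (Polynomial.C a) = Polynomial.C (D a)) ∧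
      E Polynomial.X = 0 ∧ ∀ q n, (E q).coeff n = D (q.coeff n) := by
  let _ : Differential A := ⟨D⟩
  refine ⟨Differential.mapCoeffs, fun a b => map_add _ _ _, fun a b => ?_, fun a => ?_, ?_,
    fun q n => rfl⟩
  · rw [Derivation.leibniz]; rfl
  · rw [← Polynomial.monomial_zero_left, Differential.mapCoeffs_monomial,
      Polynomial.monomial_zero_left]; rfl
  · exact Differential.mapCoeffs_X

/-- the Hessian-type polynomial -/
noncomputable def hes (f : MvPolynomial (Fin 3) K) : MvPolynomial (Fin 3) K :=
  MvPolynomial.pderiv 1 (MvPolynomial.pderiv 1 f) * (MvPolynomial.pderiv 0 f) ^ 2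
  - 2 * MvPolynomial.pderiv 1 (MvPolynomial.pderiv 0 f) * MvPolynomial.pderiv 0 f *
      MvPolynomial.pderiv 1 f
  + MvPolynomial.pderiv 0 (MvPolynomial.pderiv 0 f) * (MvPolynomial.pderiv 1 f) ^ 2

theorem pderiv_comm' (i j : Fin 3) (f : MvPolynomial (Fin 3) K) :
    MvPolynomial.pderiv i (MvPolynomial.pderiv j f) =
      MvPolynomial.pderiv j (MvPolynomial.pderiv i f) := by
  ext m
  simp only [MvPolynomial.coeff_pderiv]
  rw [add_right_comm]
  by_cases h : i = j
  · subst h; rfl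
  · simp [h, Ne.symm h]
    ring

theorem totalDegree_pderiv_le (i : Fin 3) (f : MvPolynomial (Fin 3) K) :
    (MvPolynomial.pderiv i f).totalDegree ≤ f.totalDegree - 1 := by
  show Finset.sup _ _ ≤ _
  apply Finset.sup_le
  intro m hm
  rw [MvPolynomial.mem_support_iff, MvPolynomial.coeff_pderiv] at hm
  have h1 : m + Finsupp.single i 1 ∈ f.support := by
    rw [MvPolynomial.mem_support_iff]
    exact left_ne_zero_of_mul hm
  have h2 := MvPolynomial.le_totalDegree h1
  rw [Finsupp.sum_add_index' (by simp) (by intros; rfl)] at h2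
  simp at h2
  omega

theorem not_dvd_pderiv (i : Fin 3) (f : MvPolynomial (Fin 3) K) (h : MvPolynomial.pderiv i f ≠ 0) :
    ¬ f ∣ MvPolynomial.pderiv i f := by
  intro hd
  have h1 := MvPolynomial.totalDegree_le_of_dvd_of_isDomain hd h
  have h2 := totalDegree_pderiv_le i f
  have h3 : f.totalDegree = 0 := by omega
  apply h
  rw [MvPolynomial.totalDegree_eq_zero_iff_eq_C] at h3
  rw [h3]; simp

theorem hes_totalDegree (f : MvPolynomial (Fin 3) K) : (hes f).totalDegree ≤ 3 * f.totalDegree := by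
  have h0 := totalDegree_pderiv_le 0 f
  have h1 := totalDegree_pderiv_le 1 f
  have h00 := totalDegree_pderiv_le 0 (MvPolynomial.pderiv 0 f)
  have h10 := totalDegree_pderiv_le 1 (MvPolynomial.pderiv 0 f)
  have h11 := totalDegree_pderiv_le 1 (MvPolynomial.pderiv 1 f)
  unfold hes
  refine (MvPolynomial.totalDegree_add _ _).trans (max_le ((MvPolynomial.totalDegree_sub _ _).trans
    (max_le ?_ ?_)) ?_)
  · refine (MvPolynomial.totalDegree_mul _ _).trans ?_
    have := MvPolynomial.totalDegree_pow (MvPolynomial.pderiv 0 f) 2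
    omega
  · refine (MvPolynomial.totalDegree_mul _ _).trans ?_
    have a1 := MvPolynomial.totalDegree_mul (2 * MvPolynomial.pderiv 1 (MvPolynomial.pderiv 0 f))
      (MvPolynomial.pderiv 0 f)
    have a2 := MvPolynomial.totalDegree_mul (2 : MvPolynomial (Fin 3) K) (MvPolynomial.pderiv 1 (MvPolynomial.pderiv 0 f))
    have a3 : (2 : MvPolynomial (Fin 3) K).totalDegree = 0 := by
      have : (2 : MvPolynomial (Fin 3) K) = MvPolynomial.C 2 := rfl
      rw [this, MvPolynomial.totalDegree_C]
    omega
  · refine (MvPolynomial.totalDegree_mul _ _).trans ?_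
    have := MvPolynomial.totalDegree_pow (MvPolynomial.pderiv 1 f) 2
    omega

/-- Flow along the horizontal tangent direction -/
noncomputable def flow (f : MvPolynomial (Fin 3) K) :
    MvPolynomial (Fin 3) K →ₐ[K] Polynomial (MvPolynomial (Fin 3) K) :=
  MvPolynomial.aeval ![Polynomial.C (MvPolynomial.X 0) - Polynomial.X * Polynomial.C (MvPolynomial.pderiv 1 f),
    Polynomial.C (MvPolynomial.X 1) + Polynomial.X * Polynomial.C (MvPolynomial.pderiv 0 f),
    Polynomial.C (MvPolynomial.X 2)]

theorem flow_deriv (f g : MvPolynomial (Fin 3) K) :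
    Polynomial.derivative (flow f g) =
      Polynomial.C (MvPolynomial.pderiv 0 f) * flow f (MvPolynomial.pderiv 1 g) -
      Polynomial.C (MvPolynomial.pderiv 1 f) * flow f (MvPolynomial.pderiv 0 g) := by
  induction g using MvPolynomial.induction_on with
  | C a => 
    simp [flow, MvPolynomial.algebraMap_eq, IsScalarTower.algebraMap_eq K (MvPolynomial (Fin 3) K) (Polynomial (MvPolynomial (Fin 3) K))]
  | add p q hp hq => simp only [map_add, hp, hq]; ring
  | mul_X p i hp =>
    simp only [map_mul, Polynomial.derivative_mul, hp, MvPolynomial.pderiv_mul, map_add]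
    fin_cases i <;> simp [flow] <;> ring

theorem flow_E (f g : MvPolynomial (Fin 3) K) (D : Derivation ℤ (MvPolynomial (Fin 3) K) (MvPolynomial (Fin 3) K))
    (hC : ∀ a, D (MvPolynomial.C a) = 0) (h0 : D (MvPolynomial.X 0) = - MvPolynomial.pderiv 1 f)
    (h1 : D (MvPolynomial.X 1) = MvPolynomial.pderiv 0 f) (h2 : D (MvPolynomial.X 2) = 0)
    (E : Polynomial (MvPolynomial (Fin 3) K) → Polynomial (MvPolynomial (Fin 3) K))
    (Ea : ∀ a b, E (a + b) = E a + E b) 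
    (Em : ∀ a b, E (a * b) = a * E b + b * E a) (EC : ∀ a, E (Polynomial.C a) = Polynomial.C (D a))
    (EX : E Polynomial.X = 0) :
    E (flow f g) = 
      flow f (MvPolynomial.pderiv 1 g) * (Polynomial.C (MvPolynomial.pderiv 0 f) + Polynomial.X * Polynomial.C (D (MvPolynomial.pderiv 0 f)))
      - flow f (MvPolynomial.pderiv 0 g) * (Polynomial.C (MvPolynomial.pderiv 1 f) + Polynomial.X * Polynomial.C (D (MvPolynomial.pderiv 1 f))) := by
  have Es : ∀ a b, E (a - b) = E a - E b := by
    intro a b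
    have := Ea (a - b) b
    rw [sub_add_cancel] at this
    rw [this]; ring
  induction g using MvPolynomial.induction_on with
  | C a => 
    simp [flow, MvPolynomial.algebraMap_eq, IsScalarTower.algebraMap_eq K (MvPolynomial (Fin 3) K) (Polynomial (MvPolynomial (Fin 3) K)), EC, hC]
  | add p q hp hq => simp only [map_add, hp, hq, Ea]; ring
  | mul_X p i hp =>
    simp only [map_mul, Em, hp, MvPolynomial.pderiv_mul, map_add]
    fin_cases i <;> simp [flow, Ea, Es, Em, EX, EC, h0, h1, h2] <;> ring

theorem flow_natDegree (f g : MvPolynomial (Fin 3) K) : (flow f g).natDegree ≤ g.totalDegree := by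
  have := MvPolynomial.aeval_natDegree_le (m := g.totalDegree) (n := 1)
    (MvPolynomial.map MvPolynomial.C g : MvPolynomial (Fin 3) (MvPolynomial (Fin 3) K))
    (Finset.sup_mono (MvPolynomial.support_map_subset _ _))
    ![Polynomial.C (MvPolynomial.X 0) - Polynomial.X * Polynomial.C (MvPolynomial.pderiv 1 f),
    Polynomial.C (MvPolynomial.X 1) + Polynomial.X * Polynomial.C (MvPolynomial.pderiv 0 f),
    Polynomial.C (MvPolynomial.X 2)] (by
      intro i; fin_cases i
      · simp only [Fin.zero_eta, Matrix.cons_val_zero]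
        refine (Polynomial.natDegree_sub_le _ _).trans (max_le (by simp) ?_)
        exact (Polynomial.natDegree_mul_C_le _ _).trans Polynomial.natDegree_X_le
      · simp only [Fin.mk_one, Matrix.cons_val_one]; 
        refine (Polynomial.natDegree_add_le _ _).trans (max_le (by simp) ?_)
        exact (Polynomial.natDegree_mul_C_le _ _).trans Polynomial.natDegree_X_le
      · simp)
  rw [mul_one] at this
  refine le_trans (le_of_eq ?_) this
  congr 1
  rw [flow, MvPolynomial.aeval_def, MvPolynomial.aeval_def, MvPolynomial.eval₂_map]
  rfl

theorem flow_coeff_zero (f g : MvPolynomial (Fin 3) K) : (flow f g).coeff 0 = g := by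
  induction g using MvPolynomial.induction_on with
  | C a => 
    simp [flow, MvPolynomial.algebraMap_eq, IsScalarTower.algebraMap_eq K (MvPolynomial (Fin 3) K) (Polynomial (MvPolynomial (Fin 3) K))]
  | add p q hp hq => simp [hp, hq]
  | mul_X p i hp =>
    rw [map_mul, Polynomial.mul_coeff_zero, hp]
    fin_cases i <;> simp [flow]

theorem ruled_dvd {p : ℕ} [CharP K p] (hp : p.Prime) (f : MvPolynomial (Fin 3) K) (hf : Irreducible f)
    (hd : f.totalDegree < p) (hfx : MvPolynomial.pderiv 0 f ≠ 0) (hH : f ∣ hes f) (k : ℕ) :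
    f ∣ (flow f f).coeff k := by
  set fx := MvPolynomial.pderiv 0 f with hfxd
  set fy := MvPolynomial.pderiv 1 f with hfyd
  let D : Derivation ℤ (MvPolynomial (Fin 3) K) (MvPolynomial (Fin 3) K) :=
    (fx • MvPolynomial.pderiv 1 - fy • MvPolynomial.pderiv 0 :
      Derivation K (MvPolynomial (Fin 3) K) (MvPolynomial (Fin 3) K)).restrictScalars ℤ
  have hD : ∀ g, D g = fx * MvPolynomial.pderiv 1 g - fy * MvPolynomial.pderiv 0 g := by
    intro g; rfl
  obtain ⟨E, Ea, Em, EC, EX, Ec⟩ := exists_coeff_der D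
  have hE := flow_E f f D (by intro a; simp [hD]) (by simp [hD, hfyd]) (by simp [hD, hfxd]) (by simp [hD]) E Ea Em EC EX
  have hder := flow_deriv f f
  rw [← hfxd, ← hfyd] at hE hder
  have hcross : fx * D fy = fy * D fx + hes f := by
    rw [hD, hD, hes, ← hfxd, ← hfyd]
    have : MvPolynomial.pderiv 0 fy = MvPolynomial.pderiv 1 fx := pderiv_comm' _ _ _
    rw [this]; ring
  have key : Polynomial.C fx * E (flow f f) = Polynomial.derivative (flow f f) * (Polynomial.C fx + Polynomial.X * Polynomial.C (D fx)) 
      - Polynomial.X * Polynomial.C (hes f) * flow f fx := by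
    have h2 := congrArg Polynomial.C hcross
    simp only [map_mul, map_add] at h2
    rw [hE, hder]
    linear_combination (-flow f fx * Polynomial.X) * h2
  have hprime : Prime f := hf.prime
  have hDdvd : ∀ g, f ∣ g → f ∣ D g := by
    rintro g ⟨q, rfl⟩
    rw [Derivation.leibniz]
    have : D f = 0 := by rw [hD, ← hfxd, ← hfyd]; ring
    rw [this]; simp
  induction k with
  | zero => rw [flow_coeff_zero]
  | succ k ih =>
    have hc := congrArg (fun q => Polynomial.coeff q k) key
    simp only [Polynomial.coeff_C_mul, Ec, Polynomial.coeff_sub, mul_add, Polynomial.coeff_add, Polynomial.coeff_mul_C,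
      Polynomial.coeff_derivative] at hc
    have hA : f ∣ Polynomial.coeff (Polynomial.X * Polynomial.C (hes f) * flow f fx) k := by
      have : Polynomial.X * Polynomial.C (hes f) * flow f fx = Polynomial.C (hes f) * (Polynomial.X * flow f fx) := by ring
      rw [this, Polynomial.coeff_C_mul]
      exact hH.mul_right _
    have hB : f ∣ Polynomial.coeff (Polynomial.derivative (flow f f) * (Polynomial.X * Polynomial.C (D fx))) k := by
      rw [← mul_assoc, Polynomial.coeff_mul_C]
      apply Dvd.dvd.mul_right
      cases k with
      | zero => simp
      | succ k =>
        rw [Polynomial.coeff_mul_X, Polynomial.coeff_derivative]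
        exact ih.mul_right _
    have hC : f ∣ fx * D ((flow f f).coeff k) := (hDdvd _ ih).mul_left _
    have hfin : f ∣ ((flow f f).coeff (k+1) * ((k:MvPolynomial (Fin 3) K)+1)) * fx := by
      have e : ((flow f f).coeff (k+1) * ((k:MvPolynomial (Fin 3) K)+1)) * fx = 
        fx * D ((flow f f).coeff k) - Polynomial.coeff (Polynomial.derivative (flow f f) * (Polynomial.X * Polynomial.C (D fx))) k
        + Polynomial.coeff (Polynomial.X * Polynomial.C (hes f) * flow f fx) k := by
        linear_combination -hc
      rw [e]
      exact (hC.sub hB).add hA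
    by_cases hk : (flow f f).natDegree < k + 1
    · rw [Polynomial.coeff_eq_zero_of_natDegree_lt hk]; exact dvd_zero _
    have hkp : k + 1 < p := lt_of_le_of_lt (le_trans (not_lt.mp hk) (flow_natDegree f f)) hd
    have hu : IsUnit ((k:MvPolynomial (Fin 3) K)+1) := by
      have h1 : ((k+1 : ℕ) : K) ≠ 0 := by
        intro h
        rw [CharP.cast_eq_zero_iff K p] at h
        exact absurd (Nat.le_of_dvd (by omega) h) (by omega)
      have : ((k:MvPolynomial (Fin 3) K)+1) = MvPolynomial.C ((k+1 : ℕ) : K) := by simp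
      rw [this]
      exact (IsUnit.mk0 _ h1).map MvPolynomial.C
    rcases hprime.dvd_or_dvd hfin with h | h
    · exact (hu.dvd_mul_right).mp h
    · exact absurd h (not_dvd_pderiv 0 f hfx)

/-- if the x-derivative vanishes then f does not involve x -/
theorem degreeOf_ne_of_pderiv (f : MvPolynomial (Fin 3) K) (h : MvPolynomial.pderiv 0 f ≠ 0) :
    f.degreeOf 0 ≠ 0 := by
  intro h0
  apply h
  apply MvPolynomial.pderiv_eq_zero_of_notMem_vars
  intro hv
  rw [MvPolynomial.mem_vars_iff_mem_support] at hv
  obtain ⟨m, hm, hi⟩ := hv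
  rw [Finsupp.mem_support_iff] at hi
  have := MvPolynomial.monomial_le_degreeOf 0 hm
  omega

theorem rename_of_pderiv_zero {p : ℕ} [CharP K p] (f : MvPolynomial (Fin 3) K) 
    (hd : f.totalDegree < p) (h : MvPolynomial.pderiv 0 f = 0) :
    ∃ g : MvPolynomial (Fin 2) K, MvPolynomial.rename Fin.succ g = f := by
  have hv : ∀ m ∈ f.support, m 0 = 0 := by
    intro m hm
    by_contra hne
    have h1 := congrArg (MvPolynomial.coeff (m - Finsupp.single 0 1)) h
    rw [MvPolynomial.coeff_pderiv] at h1
    have e : m - Finsupp.single 0 1 + Finsupp.single 0 1 = m := by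
      apply tsub_add_cancel_of_le
      rw [Finsupp.single_le_iff]; omega
    rw [e] at h1
    simp only [MvPolynomial.coeff_zero, mul_eq_zero] at h1
    rcases h1 with h1 | h1
    · exact (MvPolynomial.mem_support_iff.mp hm) h1
    · have h2 : ((m 0 : ℕ) : K) = 0 := by
        have : m 0 = (m - Finsupp.single (0 : Fin 3) 1 : Fin 3 →₀ ℕ) 0 + 1 := by simp; omega
        rw [this]; push_cast; exact h1
      rw [CharP.cast_eq_zero_iff K p] at h2
      have h3 := Nat.le_of_dvd (by omega) h2
      have h4 := MvPolynomial.le_totalDegree hm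
      have h5 : m 0 ≤ m.sum fun _ e => e := by
        by_cases hm0 : (0 : Fin 3) ∈ m.support
        · exact Finset.single_le_sum (f := fun i => m i) (by intros; positivity) hm0
        · simp at hm0; omega
      omega
  have : (f.vars : Set (Fin 3)) ⊆ Set.range (Fin.succ : Fin 2 → Fin 3) := by
    intro i hi
    rw [Finset.mem_coe, MvPolynomial.mem_vars_iff_mem_support] at hi
    obtain ⟨m, hm, hi⟩ := hi
    have := hv m hm
    rw [Finsupp.mem_support_iff] at hi
    refine ⟨i.pred ?_, Fin.succ_pred _ _⟩
    intro h; rw [h] at hi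
    exact hi this
  obtain ⟨g, hg⟩ := MvPolynomial.exists_rename_eq_of_vars_subset_range f Fin.succ (Fin.succ_injective _) this
  exact ⟨g, hg⟩

end Rud

section Rud
variable {K : Type*} [Field K]

theorem two_var_inj (b : Polynomial K) (hb : b ≠ 0) (y : K) (R : MvPolynomial (Fin 2) K) 
    (h : MvPolynomial.aeval ![Polynomial.C (Polynomial.C y) + Polynomial.X * Polynomial.C b,
      (Polynomial.C Polynomial.X : Polynomial (Polynomial K))] R = 0) : R = 0 := by
  let e : MvPolynomial (Fin 2) K ≃ₐ[K] Polynomial (MvPolynomial (Fin 1) K) :=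
    MvPolynomial.finSuccEquiv K 1
  let φ : MvPolynomial (Fin 1) K →ₐ[K] Polynomial K := MvPolynomial.aeval ![Polynomial.X]
  have hφ : Function.Injective φ := by
    let ψ : Polynomial K →ₐ[K] MvPolynomial (Fin 1) K := Polynomial.aeval (MvPolynomial.X 0)
    have : ψ.comp φ = AlgHom.id K _ := by
      apply MvPolynomial.algHom_ext
      intro i; fin_cases i; simp [φ, ψ]
    intro a b hab
    have h1 := DFunLike.congr_fun this a
    have h2 := DFunLike.congr_fun this b
    simp only [AlgHom.comp_apply, AlgHom.id_apply] at h1 h2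
    rw [← h1, ← h2, hab]
  set q : Polynomial (Polynomial K) := Polynomial.C (Polynomial.C y) + Polynomial.X * Polynomial.C b with hq
  have : ((Polynomial.aeval q).restrictScalars K).comp ((Polynomial.mapAlgHom φ).comp
      (e : MvPolynomial (Fin 2) K →ₐ[K] Polynomial (MvPolynomial (Fin 1) K))) =
      MvPolynomial.aeval ![q, (Polynomial.C Polynomial.X : Polynomial (Polynomial K))] := by
    apply MvPolynomial.algHom_ext
    intro i; fin_cases i
    · simp [e, φ, MvPolynomial.finSuccEquiv_X_zero]
    · have hX : MvPolynomial.finSuccEquiv K 1 (MvPolynomial.X 1) = Polynomial.C (MvPolynomial.X 0) :=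
        MvPolynomial.finSuccEquiv_X_succ (j := 0)
      simp [e, φ, hX]
  have h2 := DFunLike.congr_fun this R
  rw [h] at h2
  have h3 : (Polynomial.map (φ : MvPolynomial (Fin 1) K →+* Polynomial K) (e R)).comp q = 0 := h2
  rw [Polynomial.comp_eq_zero_iff] at h3
  rcases h3 with h3 | ⟨_, h3⟩
  · have h4 : e R = 0 := by
      apply Polynomial.map_injective (φ : MvPolynomial (Fin 1) K →+* Polynomial K) hφ
      rw [h3]; simp
    simpa using h4
  · exfalso
    have := congrArg (fun g => Polynomial.coeff g 1) h3
    simp [hq, Polynomial.coeff_C] at this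
    exact hb this

/-- lift of a polynomial in z -/
noncomputable def liftZ : Polynomial K →ₐ[K] MvPolynomial (Fin 3) K := Polynomial.aeval (MvPolynomial.X 2)

theorem resR_liftZ (j : K × K × K) (q : Polynomial K) : resR j (liftZ q) = q := by
  have : (resR j).comp liftZ = AlgHom.id K (Polynomial K) := by
    apply Polynomial.algHom_ext
    simp [resR, liftZ]
  exact DFunLike.congr_fun this q

theorem ruled_param {p : ℕ} [CharP K p] (hp : p.Prime) (f : MvPolynomial (Fin 3) K) (hf : Irreducible f)
    (hd : f.totalDegree < p) (hfx : MvPolynomial.pderiv 0 f ≠ 0) (hH : f ∣ hes f)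
    (j1 j2 : K × K × K) (hy : j1.1 ≠ j2.1) (h1 : resR j1 f = 0) (h2 : resR j2 f = 0)
    (hb : resR j1 (MvPolynomial.pderiv 0 f) ≠ 0) :
    ∃ α β γ δ : K, ∀ i, resL i f = 0 → i.2.1 = α + γ * i.1 ∧ i.2.2 = β + δ * i.1 := by
  set b := resR j1 (MvPolynomial.pderiv 0 f) with hbd
  set a := resR j1 (MvPolynomial.pderiv 1 f) with had
  let θ : MvPolynomial (Fin 3) K →ₐ[K] Polynomial (Polynomial K) := (Polynomial.mapAlgHom (resR j1)).comp (flow f)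
  have θ0 : θ (MvPolynomial.X 0) = Polynomial.C (Polynomial.C j1.2.1 + Polynomial.C j1.2.2 * Polynomial.X) - Polynomial.X * Polynomial.C a := by
    simp [θ, flow, ← had]
    simp [resR]
  have θ1 : θ (MvPolynomial.X 1) = Polynomial.C (Polynomial.C j1.1) + Polynomial.X * Polynomial.C b := by
    simp [θ, flow, ← hbd]
    simp [resR]
  have θ2 : θ (MvPolynomial.X 2) = Polynomial.C Polynomial.X := by
    simp [θ, flow]
    simp [resR]
  have θf : θ f = 0 := by
    ext1 n
    have hh := ruled_dvd hp f hf hd hfx hH n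
    have : (θ f).coeff n = resR j1 ((flow f f).coeff n) := by
      simp [θ]
    rw [this]
    obtain ⟨q, hq⟩ := hh
    rw [hq, map_mul, h1]; simp
  have θl : ∀ q, θ (liftZ q) = Polynomial.C q := by
    intro q
    have : θ.comp liftZ = (Polynomial.CAlgHom : Polynomial K →ₐ[K] Polynomial (Polynomial K)) := by
      apply Polynomial.algHom_ext
      simp [liftZ, θ2]
    exact DFunLike.congr_fun this q
  let ψ : MvPolynomial (Fin 3) K := MvPolynomial.C j1.2.1 + MvPolynomial.C j1.2.2 * MvPolynomial.X 2
  let h : MvPolynomial (Fin 3) K := liftZ b * (MvPolynomial.X 0 - ψ) + (MvPolynomial.X 1 - MvPolynomial.C j1.1) * liftZ a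
  have θC : ∀ c : K, θ (MvPolynomial.C c) = Polynomial.C (Polynomial.C c) := by
    intro c
    exact θ.commutes c
  have θh : θ h = 0 := by
    simp only [h, ψ, map_add, map_mul, map_sub, θl, θ0, θ1, θ2, θC]
    ring
  have hx := degreeOf_ne_of_pderiv f hfx
  have hfh : f ∣ h := by
    by_contra hn
    obtain ⟨R, hR, _, u, v, huv⟩ := elim_exists f h hf hx hn
    apply hR
    apply two_var_inj b hb j1.1
    have h3 := congrArg θ huv
    rw [map_add, map_mul, map_mul, θf, θh, zero_mul, zero_mul, add_zero] at h3
    rw [h3]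
    have : θ.comp (MvPolynomial.rename Fin.succ) =
       MvPolynomial.aeval ![Polynomial.C (Polynomial.C j1.1) + Polynomial.X * Polynomial.C b,
      (Polynomial.C Polynomial.X : Polynomial (Polynomial K))] := by
      apply MvPolynomial.algHom_ext
      intro i; fin_cases i
      · simp [θ1]
      · simp [θ2]
    exact (DFunLike.congr_fun this R).symm
  have hfb : ¬ f ∣ liftZ b := by
    rintro ⟨q, hq⟩
    have := congrArg θ hq
    rw [map_mul, θf, θl, zero_mul] at this
    exact hb (Polynomial.C_eq_zero.mp this)
  have hj2 : resR j2 h = 0 := by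
    obtain ⟨q, hq⟩ := hfh
    rw [hq, map_mul, h2, zero_mul]
  have hyy : j2.1 - j1.1 ≠ 0 := sub_ne_zero.mpr hy.symm
  obtain ⟨σ0, hσ0⟩ : ∃ s, s = (j1.2.1 - j2.2.1) / (j2.1 - j1.1) := ⟨_, rfl⟩
  obtain ⟨σ1, hσ1⟩ : ∃ s, s = (j1.2.2 - j2.2.2) / (j2.1 - j1.1) := ⟨_, rfl⟩
  have e0 : σ0 * (j2.1 - j1.1) = j1.2.1 - j2.2.1 := by rw [hσ0]; field_simp
  have e1 : σ1 * (j2.1 - j1.1) = j1.2.2 - j2.2.2 := by rw [hσ1]; field_simp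
  have hab : a = b * (Polynomial.C σ0 + Polynomial.C σ1 * Polynomial.X) := by
    have h3 : b * (Polynomial.C j2.2.1 + Polynomial.C j2.2.2 * Polynomial.X - (Polynomial.C j1.2.1 + Polynomial.C j1.2.2 * Polynomial.X))
      + (Polynomial.C j2.1 - Polynomial.C j1.1) * a = 0 := by
      rw [← hj2]
      simp only [h, ψ, map_add, map_mul, map_sub, resR_liftZ]
      simp [resR, MvPolynomial.algebraMap_eq, Polynomial.algebraMap_eq]
    have e0' := congrArg (Polynomial.C : K →+* _) e0
    have e1' := congrArg (Polynomial.C : K →+* _) e1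
    simp only [map_mul, map_sub] at e0' e1'
    have h4 : (Polynomial.C j2.1 - Polynomial.C j1.1) ≠ (0 : Polynomial K) := by
      rw [← map_sub]; exact Polynomial.C_ne_zero.mpr hyy
    apply mul_left_cancel₀ h4
    linear_combination h3 - b * e0' - b * Polynomial.X * e1'
  have hh : h = liftZ b * (MvPolynomial.X 0 - ψ + (MvPolynomial.X 1 - MvPolynomial.C j1.1) * (MvPolynomial.C σ0 + MvPolynomial.C σ1 * MvPolynomial.X 2)) := by
    simp only [h]
    rw [hab, map_mul]
    have : liftZ (Polynomial.C σ0 + Polynomial.C σ1 * Polynomial.X) = (MvPolynomial.C σ0 + MvPolynomial.C σ1 * MvPolynomial.X 2 : MvPolynomial (Fin 3) K) := by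
      simp [liftZ, MvPolynomial.algebraMap_eq]
    rw [this]; ring
  rw [hh] at hfh
  have hfin := (hf.prime.dvd_or_dvd hfh).resolve_left hfb
  refine ⟨j1.2.1 + j1.1 * σ0, - σ0, j1.2.2 + j1.1 * σ1, -σ1, ?_⟩
  intro i hi
  have hL : resL i (MvPolynomial.X 0 - ψ + (MvPolynomial.X 1 - MvPolynomial.C j1.1) * (MvPolynomial.C σ0 + MvPolynomial.C σ1 * MvPolynomial.X 2)) = 0 := by
    obtain ⟨q, hq⟩ := hfin
    rw [hq, map_mul, hi, zero_mul]
  simp only [ψ, map_add, map_mul, map_sub] at hL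
  simp [resL, MvPolynomial.algebraMap_eq, Polynomial.algebraMap_eq] at hL
  have c0 := congrArg (fun g => Polynomial.coeff g 0) hL
  have c1 := congrArg (fun g => Polynomial.coeff g 1) hL
  simp [sub_mul, mul_add, Polynomial.coeff_C, Polynomial.coeff_X] at c0 c1
  constructor
  · linear_combination c0
  · linear_combination c1

end Rud

section Rud
open scoped Classical
variable {K : Type*} [Field K]

theorem resL_deriv (i : K × K × K) (g : MvPolynomial (Fin 3) K) :
    Polynomial.derivative (resL i g) = Polynomial.C i.2.2 * resL i (MvPolynomial.pderiv 0 g) +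
      resL i (MvPolynomial.pderiv 1 g) := by
  induction g using MvPolynomial.induction_on with
  | C a => simp [resL]
  | add p q hp hq => simp only [map_add, hp, hq]; ring
  | mul_X p i hp =>
    simp only [map_mul, Polynomial.derivative_mul, hp, MvPolynomial.pderiv_mul, map_add]
    fin_cases i <;> simp [resL] <;> ring

theorem hes_resL (i : K × K × K) (f : MvPolynomial (Fin 3) K) (h : resL i f = 0) : resL i (hes f) = 0 := by
  have h1 := resL_deriv i f
  have h2 := resL_deriv i (MvPolynomial.pderiv 0 f)
  have h3 := resL_deriv i (MvPolynomial.pderiv 1 f)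
  rw [h, Polynomial.derivative_zero] at h1
  rw [pderiv_comm' 0 1] at h3
  have h4 := congrArg Polynomial.derivative h1
  rw [Polynomial.derivative_add, Polynomial.derivative_C_mul, h2, h3, Polynomial.derivative_zero] at h4
  have h5 : resL i (MvPolynomial.pderiv 1 f) = - (Polynomial.C i.2.2 * resL i (MvPolynomial.pderiv 0 f)) := by
    linear_combination -h1
  unfold hes
  simp only [map_add, map_sub, map_mul, map_pow, map_ofNat]
  rw [h5]
  linear_combination (-(resL i (MvPolynomial.pderiv 0 f))^2) * h4

theorem irr_totalDegree_pos (f : MvPolynomial (Fin 3) K) (hf : Irreducible f) : 1 ≤ f.totalDegree := by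
  by_contra h
  have h0 : f.totalDegree = 0 := by omega
  rw [MvPolynomial.totalDegree_eq_zero_iff_eq_C] at h0
  have hc : MvPolynomial.coeff 0 f ≠ 0 := by
    intro hc; rw [hc] at h0; apply hf.ne_zero; rw [h0]; simp
  apply hf.not_isUnit
  rw [h0]
  exact (IsUnit.mk0 _ hc).map MvPolynomial.C

/-- lying on a bilinear surface -/
def onB (i : K × K × K) (b : K × K × K × K) : Prop :=
  i.2.1 = b.1 + b.2.2.1 * i.1 ∧ i.2.2 = b.2.1 + b.2.2.2 * i.1

theorem factor_lemma {p : ℕ} [CharP K p] (hp : p.Prime) (f : MvPolynomial (Fin 3) K) (hf : Irreducible f)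
    (hd : f.totalDegree < p) (k : ℕ) (I J : Finset (K × K × K))
    (hI : Set.InjOn (fun i : K × K × K => i.1) I) (hJ : Set.InjOn (fun i : K × K × K => i.1) J)
    (hk : ∀ b, (I.filter (fun i => onB i b)).card ≤ k) :
    ∃ Bad : Finset (K × K × K), Bad ⊆ J ∧ Bad.card ≤ 9 * f.totalDegree ^ 2 ∧
      ∀ j ∈ J, resR j f = 0 → j ∉ Bad →
        (I.filter (fun i => resL i f = 0 ∧ incR i j)).card ≤ 3 * f.totalDegree + k := by
  have hd1 := irr_totalDegree_pos f hf
  have injs : ∀ S : Finset (K × K × K), S ⊆ J → Set.InjOn (fun i : K × K × K => i.1) S := by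
    intro q hq; apply hJ.mono; exact_mod_cast hq
  set d := f.totalDegree with hdd
  set Jf := J.filter (fun j => resR j f = 0) with hJf
  by_cases hfx : MvPolynomial.pderiv 0 f = 0
  · obtain ⟨g, hg⟩ := rename_of_pderiv_zero f hd hfx
    refine ⟨Jf, Finset.filter_subset _ _, ?_, ?_⟩
    · have hg0 : g ≠ 0 := by rintro rfl; apply hf.ne_zero; rw [← hg]; simp
      have h1 := rename_count g hg0 Jf (injs _ (Finset.filter_subset _ _)) (by
        intro j hj; rw [hg]; exact (Finset.mem_filter.mp hj).2)
      have h2 : g.totalDegree ≤ d := by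
        have e : g = MvPolynomial.rename ![0, 0, 1] f := by
          rw [← hg, MvPolynomial.rename_rename]
          have : (![0, 0, 1] : Fin 3 → Fin 2) ∘ Fin.succ = id := by
            ext i; fin_cases i <;> rfl
          rw [this]; simp
        rw [e]
        exact MvPolynomial.totalDegree_rename_le _ _
      nlinarith
    · intro j hj h hn; exact absurd (Finset.mem_filter.mpr ⟨hj, h⟩) hn
  have hx := degreeOf_ne_of_pderiv f hfx
  set B1 := J.filter (fun j => resR j f = 0 ∧ resR j (MvPolynomial.pderiv 0 f) = 0) with hB1
  have hB1c : B1.card ≤ 2 * d ^ 2 := by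
    have h1 := bez_count f _ hf hx (not_dvd_pderiv 0 f hfx) B1 (injs _ (Finset.filter_subset _ _)) (by
      intro j hj; exact (Finset.mem_filter.mp hj).2)
    have h2 := totalDegree_pderiv_le 0 f
    have h3 : (MvPolynomial.pderiv 0 f).totalDegree ≤ d := by omega
    calc B1.card ≤ _ := h1
      _ ≤ 2 * d * d := Nat.mul_le_mul_left _ h3
      _ = _ := by ring
  by_cases hH : f ∣ hes f
  · by_cases hone : (Jf \ B1).card ≤ 1
    · refine ⟨Jf, Finset.filter_subset _ _, ?_, ?_⟩
      · have : Jf.card ≤ (Jf \ B1).card + B1.card := by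
          have := Finset.card_le_card_sdiff_add_card (s := Jf) (t := B1); omega
        nlinarith
      · intro j hj h hn; exact absurd (Finset.mem_filter.mpr ⟨hj, h⟩) hn
    · push Not at hone
      obtain ⟨j1, hj1, j2, hj2, hne⟩ := Finset.one_lt_card.mp hone
      rw [Finset.mem_sdiff] at hj1 hj2
      have m1 := Finset.mem_filter.mp hj1.1
      have m2 := Finset.mem_filter.mp hj2.1
      have hb : resR j1 (MvPolynomial.pderiv 0 f) ≠ 0 := fun h => hj1.2 (Finset.mem_filter.mpr ⟨m1.1, m1.2, h⟩)
      obtain ⟨α, β, γ, δ, hh⟩ := ruled_param hp f hf hd hfx hH j1 j2 (fun h => hne (hJ m1.1 m2.1 h)) m1.2 m2.2 hb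
      refine ⟨∅, by simp, by simp, ?_⟩
      intro j _ _ _
      have := hk (α, β, γ, δ)
      refine le_trans (Finset.card_le_card ?_) (this.trans (by omega))
      intro i hi
      rw [Finset.mem_filter] at hi ⊢
      exact ⟨hi.1, hh i hi.2.1⟩
  · set B2 := J.filter (fun j => resR j f = 0 ∧ resR j (hes f) = 0) with hB2
    have hB2c : B2.card ≤ 6 * d ^ 2 := by
      have h1 := bez_count f _ hf hx hH B2 (injs _ (Finset.filter_subset _ _)) (by
        intro j hj; exact (Finset.mem_filter.mp hj).2)
      have h2 := hes_totalDegree f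
      calc B2.card ≤ _ := h1
        _ ≤ 2 * d * (3 * d) := Nat.mul_le_mul_left _ h2
        _ = _ := by ring
    refine ⟨B2, Finset.filter_subset _ _, by nlinarith, ?_⟩
    intro j hj hjf hjn
    have hne : resR j (hes f) ≠ 0 := fun h => hjn (Finset.mem_filter.mpr ⟨hj, hjf, h⟩)
    have := count_on_r (hes f) j hne (I.filter (fun i => resL i f = 0 ∧ incR i j)) (by
      apply hI.mono; intro x hx; exact (Finset.mem_filter.mp hx).1) (by
      intro i hi
      have := (Finset.mem_filter.mp hi).2
      exact ⟨this.2, hes_resL i f this.1⟩)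
    have h2 := hes_totalDegree f
    omega

end Rud

section Rud
open scoped Classical
variable {K : Type*} [Field K]

/-- number of lines of I meeting j -/
noncomputable def degR (I : Finset (K × K × K)) (j : K × K × K) : ℕ := (I.filter (fun i => incR i j)).card

theorem step_irr {p : ℕ} [CharP K p] (hp : p.Prime) (D0 : ℕ) (hD : D0 < p) (k : ℕ) (I J : Finset (K × K × K))
    (hI : Set.InjOn (fun i : K × K × K => i.1) I) (hJ : Set.InjOn (fun i : K × K × K => i.1) J)
    (hk : ∀ b, (I.filter (fun i => onB i b)).card ≤ k)
    (f : MvPolynomial (Fin 3) K) (hf : Irreducible f) (hfd : f.totalDegree ≤ D0) :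
    ∃ Bad : Finset (K × K × K), Bad ⊆ J ∧ Bad.card ≤ 9 * f.totalDegree ^ 2 ∧
      ∑ j ∈ J.filter (fun j => resR j f = 0 ∧ j ∉ Bad), (degR I j - (3 * D0 + k)) ≤ f.totalDegree * I.card := by
  obtain ⟨Bad, hBJ, hBc, hB⟩ := factor_lemma hp f hf (lt_of_le_of_lt hfd hD) k I J hI hJ hk
  refine ⟨Bad, hBJ, hBc, ?_⟩
  calc ∑ j ∈ J.filter (fun j => resR j f = 0 ∧ j ∉ Bad), (degR I j - (3 * D0 + k)) 
      ≤ ∑ j ∈ J.filter (fun j => resR j f = 0 ∧ j ∉ Bad), ((I.filter (fun i => resL i f ≠ 0 ∧ incR i j)).card) := by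
        apply Finset.sum_le_sum
        intro j hj
        rw [Finset.mem_filter] at hj
        have h1 := hB j hj.1 hj.2.1 hj.2.2
        have h2 : degR I j ≤ (I.filter (fun i => resL i f = 0 ∧ incR i j)).card + (I.filter (fun i => resL i f ≠ 0 ∧ incR i j)).card := by
          refine le_trans (Finset.card_le_card ?_) (Finset.card_union_le _ _)
          intro i hi
          rw [Finset.mem_filter] at hi
          by_cases h : resL i f = 0
          · exact Finset.mem_union_left _ (Finset.mem_filter.mpr ⟨hi.1, h, hi.2⟩)
          · exact Finset.mem_union_right _ (Finset.mem_filter.mpr ⟨hi.1, h, hi.2⟩)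
        omega
    _ = ∑ i ∈ I.filter (fun i => resL i f ≠ 0), ((J.filter (fun j => resR j f = 0 ∧ j ∉ Bad)).filter (fun j => incR i j)).card := by
        simp_rw [← Finset.filter_filter]
        exact Finset.sum_card_bipartiteAbove_eq_sum_card_bipartiteBelow (fun j i => incR i j)
    _ ≤ ∑ i ∈ I.filter (fun i => resL i f ≠ 0), f.totalDegree := by
        apply Finset.sum_le_sum
        intro i hi
        rw [Finset.mem_filter] at hi
        apply count_on_l f i hi.2
        · apply hJ.mono
          intro x hx
          exact (Finset.mem_filter.mp (Finset.mem_filter.mp hx).1).1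
        · intro j hj
          have := Finset.mem_filter.mp hj
          exact ⟨this.2, (Finset.mem_filter.mp this.1).2.1⟩
    _ ≤ f.totalDegree * I.card := by
        rw [Finset.sum_const, smul_eq_mul, mul_comm]
        exact Nat.mul_le_mul_left _ (Finset.card_le_card (Finset.filter_subset _ _))

theorem step_gen {p : ℕ} [CharP K p] (hp : p.Prime) (D0 : ℕ) (hD : D0 < p) (k : ℕ) (I J : Finset (K × K × K))
    (hI : Set.InjOn (fun i : K × K × K => i.1) I) (hJ : Set.InjOn (fun i : K × K × K => i.1) J)
    (hk : ∀ b, (I.filter (fun i => onB i b)).card ≤ k)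
    (f : MvPolynomial (Fin 3) K) : f ≠ 0 → f.totalDegree ≤ D0 → 
    ∃ Bad : Finset (K × K × K), Bad ⊆ J ∧ Bad.card ≤ 9 * f.totalDegree ^ 2 ∧
      ∑ j ∈ J.filter (fun j => resR j f = 0 ∧ j ∉ Bad), (degR I j - (3 * D0 + k)) ≤ f.totalDegree * I.card := by
  refine WfDvdMonoid.induction_on_irreducible f ?_ ?_ ?_
  · intro h; exact absurd rfl h
  · intro u hu _ _
    refine ⟨∅, by simp, by simp, ?_⟩
    rw [Finset.sum_eq_zero]
    · positivity
    · intro j hj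
      exfalso
      exact (hu.map (resR j)).ne_zero (Finset.mem_filter.mp hj).2.1
  · intro g q hg hq ih hne hdeg
    have hmul : (q * g).totalDegree = q.totalDegree + g.totalDegree :=
      MvPolynomial.totalDegree_mul_of_isDomain hq.ne_zero hg
    obtain ⟨B1, hB1, hc1, hs1⟩ := ih hg (by omega)
    obtain ⟨B2, hB2, hc2, hs2⟩ := step_irr hp D0 hD k I J hI hJ hk q hq (by omega)
    refine ⟨B2 ∪ B1, Finset.union_subset hB2 hB1, ?_, ?_⟩
    · have := Finset.card_union_le B2 B1
      rw [hmul]; nlinarith [Nat.zero_le (q.totalDegree * g.totalDegree)]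
    · rw [hmul, add_mul]
      refine le_trans ?_ (Nat.add_le_add hs2 hs1)
      refine le_trans (Finset.sum_le_sum_of_subset (t := J.filter (fun j => resR j q = 0 ∧ j ∉ B2) ∪ J.filter (fun j => resR j g = 0 ∧ j ∉ B1)) ?_) ?_
      · intro j hj
        rw [Finset.mem_filter, map_mul, mul_eq_zero, Finset.mem_union, not_or] at hj
        rw [Finset.mem_union, Finset.mem_filter, Finset.mem_filter]
        tauto
      · rw [← Finset.sum_union_inter]
        exact Nat.le_add_right _ _

theorem exists_vanishing (I : Finset (K × K × K)) :
    ∃ f : MvPolynomial (Fin 3) K, f ≠ 0 ∧ f.totalDegree ≤ 3 * Nat.sqrt (3 * I.card) ∧ ∀ i ∈ I, resL i f = 0 := by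
  obtain ⟨s, hs⟩ : ∃ s, s = Nat.sqrt (3 * I.card) := ⟨_, rfl⟩
  rw [← hs]
  let m := s + 1
  let ex : (Fin 3 → Fin m) → (Fin 3 →₀ ℕ) := fun e => Finsupp.equivFunOnFinite.symm (fun k => (e k : ℕ))
  have hex : Function.Injective ex := by
    intro a b hab
    have := Finsupp.equivFunOnFinite.symm.injective hab
    funext k
    exact Fin.ext (congrFun this k)
  let P : ((Fin 3 → Fin m) → K) →ₗ[K] MvPolynomial (Fin 3) K :=
    ∑ e, (MvPolynomial.monomial (ex e)).comp (LinearMap.proj e)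
  have hP : ∀ c, P c = ∑ e, MvPolynomial.monomial (ex e) (c e) := by
    intro c; simp [P]
  let L : ((Fin 3 → Fin m) → K) →ₗ[K] (I × Fin (3 * m) → K) :=
    LinearMap.pi (fun q => (Polynomial.lcoeff K q.2).comp ((resL q.1.1).toLinearMap.comp P))
  have hker : LinearMap.ker L ≠ ⊥ := by
    apply LinearMap.ker_ne_bot_of_finrank_lt
    simp only [Module.finrank_fintype_fun_eq_card, Fintype.card_prod, Fintype.card_coe, Fintype.card_fin, Fintype.card_fun]
    have h1 : 3 * I.card < m * m := by
      have := Nat.lt_succ_sqrt (3 * I.card)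
      rw [← hs] at this; exact this
    have : m ≥ 1 := by simp [m]
    nlinarith
  obtain ⟨c, hc, hc0⟩ := (Submodule.ne_bot_iff _).mp hker
  have hcoef : ∀ e, MvPolynomial.coeff (ex e) (P c) = c e := by
    intro e
    rw [hP, MvPolynomial.coeff_sum]
    simp only [MvPolynomial.coeff_monomial]
    rw [Finset.sum_eq_single e]
    · simp
    · intro b _ hb
      rw [if_neg]; intro h; exact hb (hex h)
    · simp
  have hdeg : (P c).totalDegree ≤ 3 * s := by
    rw [hP]
    apply MvPolynomial.totalDegree_finsetSum_le
    intro e _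
    refine (MvPolynomial.totalDegree_monomial_le _ _).trans ?_
    have : ((ex e).sum fun _ e => e) = ∑ k : Fin 3, (e k : ℕ) := by
      rw [Finsupp.sum_fintype _ _ (by simp)]
      rfl
    change ((ex e).sum fun _ e => e) ≤ _
    rw [this]
    calc ∑ k : Fin 3, (e k : ℕ) ≤ ∑ k : Fin 3, s := Finset.sum_le_sum (fun k _ => by have := (e k).2; omega)
      _ = _ := by simp
  refine ⟨P c, ?_, hdeg, ?_⟩
  · intro h
    apply hc0
    funext e
    rw [← hcoef e, h]; simp
  · intro i hi
    ext n
    rw [Polynomial.coeff_zero]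
    by_cases hn : n < 3 * m
    · have h1 := congrFun (LinearMap.mem_ker.mp hc) (⟨i, hi⟩, ⟨n, hn⟩)
      simpa [L] using h1
    · apply Polynomial.coeff_eq_zero_of_natDegree_lt
      refine lt_of_le_of_lt (resL_natDegree i _) ?_
      have : m = s + 1 := rfl
      omega

/-- one step: outside of a set of at most 243 n r-lines there are few incidences -/
theorem step_main {p : ℕ} [CharP K p] (hp : p.Prime) (k : ℕ) (I J : Finset (K × K × K))
    (hI : Set.InjOn (fun i : K × K × K => i.1) I) (hJ : Set.InjOn (fun i : K × K × K => i.1) J)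
    (hk : ∀ b, (I.filter (fun i => onB i b)).card ≤ k) (hn : 27 * I.card < p ^ 2) :
    ∃ Bad : Finset (K × K × K), Bad ⊆ J ∧ Bad.card ≤ 243 * I.card ∧
      ∑ j ∈ J \ Bad, degR I j ≤ (3 * (3 * Nat.sqrt (3 * I.card)) + k) * J.card + 3 * Nat.sqrt (3 * I.card) * I.card := by
  obtain ⟨f, hf0, hfd, hfI⟩ := exists_vanishing I
  set D := 3 * Nat.sqrt (3 * I.card) with hD
  have hD2 : D ^ 2 ≤ 27 * I.card := by
    have := Nat.sqrt_le (3 * I.card)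
    rw [hD]; nlinarith
  have hDp : D < p := by
    by_contra h
    push Not at h
    have : p ^ 2 ≤ D ^ 2 := Nat.pow_le_pow_left h 2
    omega
  obtain ⟨Bad, hB, hBc, hs⟩ := step_gen hp D hDp k I J hI hJ hk f hf0 hfd
  refine ⟨Bad, hB, ?_, ?_⟩
  · have : f.totalDegree ^ 2 ≤ D ^ 2 := Nat.pow_le_pow_left hfd 2
    omega
  · rw [← Finset.sum_filter_add_sum_filter_not (J \ Bad) (fun j => resR j f = 0)]
    have e1 : ∑ j ∈ (J \ Bad).filter (fun j => resR j f = 0), degR I j ≤ (3 * D + k) * ((J \ Bad).filter (fun j => resR j f = 0)).card + D * I.card := by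
      calc _ ≤ ∑ j ∈ (J \ Bad).filter (fun j => resR j f = 0), ((3 * D + k) + (degR I j - (3 * D + k))) := by
            apply Finset.sum_le_sum; intro j _; omega
        _ = (3 * D + k) * ((J \ Bad).filter (fun j => resR j f = 0)).card + ∑ j ∈ (J \ Bad).filter (fun j => resR j f = 0), (degR I j - (3 * D + k)) := by
            rw [Finset.sum_add_distrib, Finset.sum_const, smul_eq_mul, mul_comm]
        _ ≤ _ := by
            apply Nat.add_le_add_left
            refine le_trans (Finset.sum_le_sum_of_subset ?_) (hs.trans (Nat.mul_le_mul_right _ hfd))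
            intro j hj
            rw [Finset.mem_filter, Finset.mem_sdiff] at hj
            rw [Finset.mem_filter]; tauto
    have e2 : ∑ j ∈ (J \ Bad).filter (fun j => ¬ resR j f = 0), degR I j ≤ (3 * D + k) * ((J \ Bad).filter (fun j => ¬ resR j f = 0)).card := by
      rw [mul_comm, ← smul_eq_mul, ← Finset.sum_const]
      apply Finset.sum_le_sum
      intro j hj
      rw [Finset.mem_filter] at hj
      have := count_on_r f j hj.2 (I.filter (fun i => incR i j)) (by
        apply hI.mono; intro x hx; exact (Finset.mem_filter.mp hx).1) (by
        intro i hi; rw [Finset.mem_filter] at hi; exact ⟨hi.2, hfI i hi.1⟩)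
      unfold degR
      omega
    have e3 : ((J \ Bad).filter (fun j => resR j f = 0)).card + ((J \ Bad).filter (fun j => ¬ resR j f = 0)).card ≤ J.card := by
      rw [Finset.card_filter_add_card_filter_not]
      exact Finset.card_le_card Finset.sdiff_subset
    nlinarith [Nat.zero_le (3*D+k), Nat.mul_le_mul_left (3*D+k) e3]

end Rud

section Rud
open scoped Classical
variable {K : Type*} [Field K]

/-- incidences -/
noncomputable def incN (I J : Finset (K × K × K)) : ℕ := ∑ j ∈ J, degR I j

theorem degR_union_le (I I' : Finset (K × K × K)) (j : K × K × K) : degR (I ∪ I') j ≤ degR I j + degR I' j := by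
  unfold degR
  rw [Finset.filter_union]
  exact Finset.card_union_le _ _

theorem degR_mono {I I' : Finset (K × K × K)} (h : I ⊆ I') (j : K × K × K) : degR I j ≤ degR I' j :=
  Finset.card_le_card (Finset.filter_subset_filter _ h)

theorem incN_union_le (I I' J : Finset (K × K × K)) : incN (I ∪ I') J ≤ incN I J + incN I' J := by
  unfold incN
  rw [← Finset.sum_add_distrib]
  exact Finset.sum_le_sum (fun j _ => degR_union_le I I' j)

theorem incN_mono {I I' : Finset (K × K × K)} (h : I ⊆ I') (J : Finset (K × K × K)) : incN I J ≤ incN I' J :=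
  Finset.sum_le_sum (fun j _ => degR_mono h j)

theorem incN_split (J : Finset (K × K × K)) (a B m : ℕ) : ∀ I : Finset (K × K × K), I.card ≤ m * a →
    (∀ I' ⊆ I, I'.card ≤ a → incN I' J ≤ B) → incN I J ≤ m * B := by
  induction m with
  | zero =>
    intro I hI _
    have : I = ∅ := by
      apply Finset.card_eq_zero.mp; omega
    subst this
    simp [incN, degR]
  | succ m ih =>
    intro I hI h
    by_cases hc : I.card ≤ a
    · exact (h I subset_rfl hc).trans (Nat.le_mul_of_pos_left _ (by omega))
    · obtain ⟨S, hS, hSc⟩ := Finset.exists_subset_card_eq (s := I) (n := a) (by omega)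
      have h1 := h S hS hSc.le
      have h2 := ih (I \ S) (by
        rw [Finset.card_sdiff_of_subset hS, hSc]
        have : (m+1)*a = m*a + a := by ring
        omega) (fun I' hI' hc' => h I' (hI'.trans Finset.sdiff_subset) hc')
      have h3 := incN_union_le S (I \ S) J
      rw [Finset.union_sdiff_of_subset hS] at h3
      have : (m+1)*B = m*B + B := by ring
      omega

theorem rich_removal (M : ℕ) (hM : 1 ≤ M) : ∀ n, ∀ I : Finset (K × K × K), I.card ≤ n →
    ∃ (I0 : Finset (K × K × K)) (B : Finset (K × K × K × K)), I0 ⊆ I ∧ (∀ b, (I0.filter (fun i => onB i b)).card ≤ M) ∧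
      B.card * M ≤ I.card ∧ ∀ i ∈ I, i ∉ I0 → ∃ b ∈ B, onB i b := by
  intro n
  induction n with
  | zero =>
    intro I hI
    have : I = ∅ := Finset.card_eq_zero.mp (by omega)
    subst this
    exact ⟨∅, ∅, by simp, by simp, by simp, by simp⟩
  | succ n ih =>
    intro I hI
    by_cases h : ∀ b, (I.filter (fun i => onB i b)).card ≤ M
    · exact ⟨I, ∅, subset_rfl, h, by simp, fun i hi hn => absurd hi hn⟩
    · push Not at h
      obtain ⟨b, hb⟩ := h
      have hcard : (I.filter (fun i => onB i b)).card + (I.filter (fun i => ¬ onB i b)).card = I.card :=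
        Finset.card_filter_add_card_filter_not _
      obtain ⟨I0, B, h1, h2, h3, h4⟩ := ih (I.filter (fun i => ¬ onB i b)) (by omega)
      refine ⟨I0, insert b B, h1.trans (Finset.filter_subset _ _), h2, ?_, ?_⟩
      · have := Finset.card_insert_le b B
        nlinarith
      · intro i hi hn
        by_cases hib : onB i b
        · exact ⟨b, Finset.mem_insert_self _ _, hib⟩
        · obtain ⟨b', hb', hh⟩ := h4 i (Finset.mem_filter.mpr ⟨hi, hib⟩) hn
          exact ⟨b', Finset.mem_insert_of_mem hb', hh⟩

/-- r-line contained in bilinear surface -/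
def onB' (j : K × K × K) (b : K × K × K × K) : Prop :=
  j.2.1 = b.1 + b.2.1 * j.1 ∧ j.2.2 = b.2.2.1 + b.2.2.2 * j.1

theorem sec_le_one (I : Finset (K × K × K)) (hI : Set.InjOn (fun i : K × K × K => i.1) I) (b : K × K × K × K)
    (j : K × K × K) (hj : ¬ onB' j b) : degR (I.filter (fun i => onB i b)) j ≤ 1 := by
  unfold degR
  rw [Finset.card_le_one]
  intro i hi i' hi'
  rw [Finset.mem_filter, Finset.mem_filter] at hi hi'
  obtain ⟨⟨hiI, h1, h2⟩, h3⟩ := hi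
  obtain ⟨⟨hiI', h1', h2'⟩, h3'⟩ := hi'
  apply hI hiI hiI'
  by_contra hne
  simp only at hne
  apply hj
  unfold incR at h3 h3'
  rw [h1, h2] at h3
  rw [h1', h2'] at h3'
  have hd : i.1 - i'.1 ≠ 0 := sub_ne_zero.mpr hne
  have hS : j.2.2 = b.2.2.1 + b.2.2.2 * j.1 := by
    apply mul_right_cancel₀ hd
    linear_combination h3' - h3
  refine ⟨?_, hS⟩
  rw [hS] at h3
  linear_combination -h3

theorem pair_share (J : Finset (K × K × K)) (hJ : Set.InjOn (fun i : K × K × K => i.1) J) (b b' : K × K × K × K) (hb : b ≠ b') :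
    (J.filter (fun j => onB' j b ∧ onB' j b')).card ≤ 1 := by
  rw [Finset.card_le_one]
  intro j hj j' hj'
  rw [Finset.mem_filter] at hj hj'
  obtain ⟨hjJ, ⟨h1, h2⟩, h3, h4⟩ := hj
  obtain ⟨hjJ', ⟨h1', h2'⟩, h3', h4'⟩ := hj'
  apply hJ hjJ hjJ'
  by_contra hne
  simp only at hne
  have hd : j.1 - j'.1 ≠ 0 := sub_ne_zero.mpr hne
  apply hb
  have e1 : b.2.1 = b'.2.1 := by
    apply mul_right_cancel₀ hd
    linear_combination h3 - h3' - h1 + h1'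
  have e2 : b.2.2.2 = b'.2.2.2 := by
    apply mul_right_cancel₀ hd
    linear_combination h4 - h4' - h2 + h2'
  have e3 : b.1 = b'.1 := by
    rw [e1] at h1; linear_combination h3 - h1
  have e4 : b.2.2.1 = b'.2.2.1 := by
    rw [e2] at h2; linear_combination h4 - h2
  exact Prod.ext e3 (Prod.ext e1 (Prod.ext e4 e2))

theorem sum_sec (J : Finset (K × K × K)) (hJ : Set.InjOn (fun i : K × K × K => i.1) J) (B : Finset (K × K × K × K)) :
    ∑ b ∈ B, (J.filter (fun j => onB' j b)).card ≤ J.card + B.card ^ 2 := by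
  have hsw : ∑ b ∈ B, (J.filter (fun j => onB' j b)).card = ∑ j ∈ J, (B.filter (fun b => onB' j b)).card :=
    Finset.sum_card_bipartiteAbove_eq_sum_card_bipartiteBelow (fun b j => onB' j b)
  have hoff : ∑ q ∈ B.offDiag, (J.filter (fun j => onB' j q.1 ∧ onB' j q.2)).card = ∑ j ∈ J, (B.offDiag.filter (fun q => onB' j q.1 ∧ onB' j q.2)).card :=
    Finset.sum_card_bipartiteAbove_eq_sum_card_bipartiteBelow (fun (q : (K × K × K × K) × (K × K × K × K)) j => onB' j q.1 ∧ onB' j q.2)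
  have h1 : ∑ q ∈ B.offDiag, (J.filter (fun j => onB' j q.1 ∧ onB' j q.2)).card ≤ B.card ^ 2 := by
    calc _ ≤ ∑ q ∈ B.offDiag, 1 := Finset.sum_le_sum (fun q hq => pair_share J hJ q.1 q.2 (Finset.mem_offDiag.mp hq).2.2)
      _ = B.offDiag.card := by simp
      _ ≤ _ := by rw [Finset.offDiag_card, sq]; omega
  rw [hsw]
  calc ∑ j ∈ J, (B.filter (fun b => onB' j b)).card ≤ ∑ j ∈ J, (1 + (B.offDiag.filter (fun q => onB' j q.1 ∧ onB' j q.2)).card) := by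
        apply Finset.sum_le_sum
        intro j _
        have e : (B.offDiag.filter (fun q => onB' j q.1 ∧ onB' j q.2)) = (B.filter (fun b => onB' j b)).offDiag := by
          ext q
          simp only [Finset.mem_filter, Finset.mem_offDiag]
          tauto
        rw [e, Finset.offDiag_card]
        generalize (B.filter (fun b => onB' j b)).card = c
        rcases c with _ | _ | c
        · omega
        · omega
        · have : (c + 1 + 1) * (c+1+1) = (c+1+1) + (c+1+1)*(c+1) := by ring
          rw [this]; 
          have : (c+1+1)*(c+1) ≥ c + 1 + 1 := Nat.le_mul_of_pos_right _ (by omega)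
          omega
    _ ≤ _ := by
        rw [Finset.sum_add_distrib, ← hoff]; simp; exact h1

theorem removal_cost (I J : Finset (K × K × K))
    (hI : Set.InjOn (fun i : K × K × K => i.1) I) (hJ : Set.InjOn (fun i : K × K × K => i.1) J) (k : ℕ)
    (hk : ∀ b, (I.filter (fun i => onB i b)).card ≤ k) (I0 : Finset (K × K × K)) (B : Finset (K × K × K × K)) 
    (hB : ∀ i ∈ I, i ∉ I0 → ∃ b ∈ B, onB i b) :
    incN I J ≤ incN I0 J + B.card * J.card + k * (J.card + B.card ^ 2) := by
  have h1 : ∀ j, degR I j ≤ degR I0 j + ∑ b ∈ B, degR (I.filter (fun i => onB i b)) j := by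
    intro j
    unfold degR
    calc (I.filter (fun i => incR i j)).card ≤ (I0.filter (fun i => incR i j) ∪ B.biUnion (fun b => (I.filter (fun i => onB i b)).filter (fun i => incR i j))).card := by
          apply Finset.card_le_card
          intro i hi
          rw [Finset.mem_filter] at hi
          rw [Finset.mem_union]
          by_cases h0 : i ∈ I0
          · left; exact Finset.mem_filter.mpr ⟨h0, hi.2⟩
          · right
            obtain ⟨b, hb, hib⟩ := hB i hi.1 h0
            rw [Finset.mem_biUnion]
            exact ⟨b, hb, Finset.mem_filter.mpr ⟨Finset.mem_filter.mpr ⟨hi.1, hib⟩, hi.2⟩⟩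
      _ ≤ _ := (Finset.card_union_le _ _).trans (Nat.add_le_add_left Finset.card_biUnion_le _)
  have h2 : ∀ b, ∑ j ∈ J, degR (I.filter (fun i => onB i b)) j ≤ J.card + k * (J.filter (fun j => onB' j b)).card := by
    intro b
    rw [← Finset.sum_filter_add_sum_filter_not J (fun j => onB' j b), add_comm]
    apply Nat.add_le_add
    · calc _ ≤ ∑ j ∈ J.filter (fun j => ¬ onB' j b), 1 := Finset.sum_le_sum (fun j hj => sec_le_one I hI b j (Finset.mem_filter.mp hj).2)
        _ = (J.filter (fun j => ¬ onB' j b)).card := by simp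
        _ ≤ _ := Finset.card_le_card (Finset.filter_subset _ _)
    · calc _ ≤ ∑ j ∈ J.filter (fun j => onB' j b), k := Finset.sum_le_sum (fun j hj => (Finset.card_le_card (Finset.filter_subset _ _)).trans (hk b))
        _ = _ := by rw [Finset.sum_const, smul_eq_mul, mul_comm]
  unfold incN
  calc ∑ j ∈ J, degR I j ≤ ∑ j ∈ J, (degR I0 j + ∑ b ∈ B, degR (I.filter (fun i => onB i b)) j) := Finset.sum_le_sum (fun j _ => h1 j)
    _ = ∑ j ∈ J, degR I0 j + ∑ b ∈ B, ∑ j ∈ J, degR (I.filter (fun i => onB i b)) j := by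
        rw [Finset.sum_add_distrib, Finset.sum_comm]
    _ ≤ ∑ j ∈ J, degR I0 j + ∑ b ∈ B, (J.card + k * (J.filter (fun j => onB' j b)).card) := 
        Nat.add_le_add_left (Finset.sum_le_sum (fun b _ => h2 b)) _
    _ = ∑ j ∈ J, degR I0 j + (B.card * J.card + k * ∑ b ∈ B, (J.filter (fun j => onB' j b)).card) := by
        rw [Finset.sum_add_distrib, Finset.sum_const, smul_eq_mul, Finset.mul_sum]
    _ ≤ _ := by
        have := Nat.mul_le_mul_left k (sum_sec J hJ B)
        omega

theorem incN_sdiff (I J Bad : Finset (K × K × K)) (h : Bad ⊆ J) : incN I J = (∑ j ∈ J \ Bad, degR I j) + incN I Bad := by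
  unfold incN
  rw [Finset.sum_sdiff h]

theorem level_step {p : ℕ} [CharP K p] (hp : p.Prime) (k l : ℕ) (I J : Finset (K × K × K))
    (hI : Set.InjOn (fun i : K × K × K => i.1) I) (hJ : Set.InjOn (fun i : K × K × K => i.1) J)
    (hk : ∀ b, (I.filter (fun i => onB i b)).card ≤ k) (hn : 27 * I.card < p ^ 2) (hl : I.card ≤ 4 ^ l) :
    ∃ I0 Bad : Finset (K × K × K), I0 ⊆ I ∧ Bad ⊆ J ∧ Bad.card ≤ 243 * 4 ^ l ∧ (∀ b, (I0.filter (fun i => onB i b)).card ≤ 2 ^ l) ∧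
     incN I J ≤ incN I0 Bad + 20 * 2 ^ l * J.card + k * (J.card + 4 ^ l) + 6 * 8 ^ l := by
  obtain ⟨I0, B, h1, h2, h3, h4⟩ := rich_removal (2 ^ l) Nat.one_le_two_pow I.card I le_rfl
  have hc0 : I0.card ≤ I.card := Finset.card_le_card h1
  have hI0 : Set.InjOn (fun i : K × K × K => i.1) I0 := hI.mono (by exact_mod_cast h1)
  obtain ⟨Bad, g1, g2, g3⟩ := step_main hp (2 ^ l) I0 J hI0 hJ h2 (by omega)
  have hcost := removal_cost I J hI hJ k hk I0 B h4
  refine ⟨I0, Bad, h1, g1, by omega, h2, ?_⟩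
  have h44 : 4 ^ l = 2 ^ l * 2 ^ l := by rw [← mul_pow]; norm_num
  have h88 : 8 ^ l = 2 ^ l * 2 ^ l * 2 ^ l := by rw [← mul_pow, ← mul_pow]; norm_num
  have hB : B.card ≤ 2 ^ l := by
    have : B.card * 2 ^ l ≤ 2 ^ l * 2 ^ l := by omega
    exact Nat.le_of_mul_le_mul_right this (by positivity)
  have hB2 : B.card ^ 2 ≤ 4 ^ l := by
    rw [h44, sq]; exact Nat.mul_le_mul hB hB
  have hs : Nat.sqrt (3 * I0.card) ≤ 2 * 2 ^ l := by
    rw [← Nat.lt_succ_iff, Nat.sqrt_lt]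
    have : I0.card ≤ 2 ^ l * 2 ^ l := by omega
    nlinarith
  rw [incN_sdiff I0 J Bad g1] at hcost
  have e1 : (3 * (3 * Nat.sqrt (3 * I0.card)) + 2 ^ l) * J.card ≤ (19 * 2 ^ l) * J.card := Nat.mul_le_mul_right _ (by omega)
  have e2 : 3 * Nat.sqrt (3 * I0.card) * I0.card ≤ 6 * 8 ^ l := by
    calc _ ≤ (6 * 2 ^ l) * 4 ^ l := Nat.mul_le_mul (by omega) (by omega)
      _ = _ := by rw [h88, h44]; ring
  have e3 : B.card * J.card ≤ 2 ^ l * J.card := Nat.mul_le_mul_right _ hB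
  have e4 : k * (J.card + B.card ^ 2) ≤ k * (J.card + 4 ^ l) := Nat.mul_le_mul_left _ (by omega)
  have e5 : 20 * 2 ^ l * J.card = 2 ^ l * J.card + 19 * 2 ^ l * J.card := by ring
  omega

theorem level_claim {p : ℕ} [CharP K p] (hp : p.Prime) (l : ℕ) : ∀ (I J : Finset (K × K × K)),
    Set.InjOn (fun i : K × K × K => i.1) I → Set.InjOn (fun i : K × K × K => i.1) J →
    (∀ b, (I.filter (fun i => onB i b)).card ≤ 2 * 2 ^ l) → 27 * I.card < p ^ 2 → I.card ≤ 4 ^ l → J.card ≤ 972 * 4 ^ l →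
     incN I J ≤ 50000 * 8 ^ l := by
  induction l with
  | zero =>
    intro I J _ _ _ _ h1 h2
    unfold incN
    calc ∑ j ∈ J, degR I j ≤ ∑ j ∈ J, 1 := Finset.sum_le_sum (fun j _ => (Finset.card_le_card (Finset.filter_subset _ _)).trans (by simpa using h1))
      _ = J.card := by simp
      _ ≤ _ := by omega
  | succ l ih =>
    intro I J hI hJ hk hn hl hJc
    obtain ⟨I0, Bad, h1, h2, h3, h4, h5⟩ := level_step hp _ (l+1) I J hI hJ hk hn hl
    have h6 : incN I0 Bad ≤ 4 * (50000 * 8 ^ l) := by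
      apply incN_split Bad (4 ^ l) _ 4 I0
      · have := Finset.card_le_card h1
        rw [pow_succ] at hl; omega
      · intro I' hI' hc
        have hI'c := Finset.card_le_card (hI'.trans h1)
        apply ih I' Bad (hI.mono (by exact_mod_cast hI'.trans h1)) (hJ.mono (by exact_mod_cast h2)) _ (by omega) hc
        · rw [pow_succ] at h3; omega
        · intro b
          refine (Finset.card_le_card (Finset.filter_subset_filter _ hI')).trans ((h4 b).trans ?_)
          rw [pow_succ]; omega
    have h88 : 8 ^ (l+1) = 2 ^ (l+1) * 4 ^ (l+1) := by rw [← mul_pow]; norm_num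
    have e1 : 20 * 2 ^ (l+1) * J.card ≤ 19440 * 8 ^ (l+1) := by
      rw [h88]
      calc 20 * 2 ^ (l+1) * J.card ≤ 20 * 2 ^ (l+1) * (972 * 4 ^ (l+1)) := Nat.mul_le_mul_left _ hJc
        _ = _ := by ring
    have e2 : 2 * 2 ^ (l+1) * (J.card + 4 ^ (l+1)) ≤ 1946 * 8 ^ (l+1) := by
      rw [h88]
      calc _ ≤ 2 * 2 ^ (l+1) * (973 * 4 ^ (l+1)) := Nat.mul_le_mul_left _ (by omega)
        _ = _ := by ring
    have e3 : 8 ^ (l+1) = 8 * 8 ^ l := by ring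
    omega

theorem rudnev {p : ℕ} [CharP K p] (hp : p.Prime) (k l : ℕ) (I J : Finset (K × K × K))
    (hI : Set.InjOn (fun i : K × K × K => i.1) I) (hJ : Set.InjOn (fun i : K × K × K => i.1) J)
    (hk : ∀ b, (I.filter (fun i => onB i b)).card ≤ k) (hn : 27 * I.card < p ^ 2) (hl : I.card ≤ 4 ^ l) :
    incN I J ≤ 20 * 2 ^ l * J.card + k * (J.card + 4 ^ l) + 50006 * 8 ^ l := by
  obtain ⟨I0, Bad, h1, h2, h3, h4, h5⟩ := level_step hp k l I J hI hJ hk hn hl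
  have hc := Finset.card_le_card h1
  have h6 := level_claim hp l I0 Bad (hI.mono (by exact_mod_cast h1)) (hJ.mono (by exact_mod_cast h2)) 
    (fun b => (h4 b).trans (by omega)) (by omega) (by omega) (by omega)
  omega

end Rud

section App
open scoped Classical
variable {F K : Type*} [Field F] [Field K]

noncomputable def ae3 (v : (F × F) × F) : Polynomial F := 1 - Polynomial.X ^ 2 * Polynomial.C v.1.1
noncomputable def ae4 (v : (F × F) × F) : Polynomial F :=
  Polynomial.C v.2 - Polynomial.X ^ 4 * Polynomial.C v.1.1 - Polynomial.X * Polynomial.C v.1.2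
noncomputable def bp1 (v : (F × F) × F) : Polynomial F := 1 - Polynomial.X * Polynomial.C v.1.1
noncomputable def bp2 (v : (F × F) × F) : Polynomial F :=
  Polynomial.C v.2 - Polynomial.X ^ 2 * Polynomial.C v.1.2 - Polynomial.X ^ 4 * Polynomial.C v.1.1

noncomputable def fi (φ : Polynomial F →+* K) (v : (F × F) × F) : K × K × K :=
  (φ (ae4 v) / φ (ae3 v), φ (Polynomial.C v.1.2) / φ (ae3 v), φ (Polynomial.C v.1.1) / φ (ae3 v))
noncomputable def fj (φ : Polynomial F →+* K) (v : (F × F) × F) : K × K × K :=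
  (φ (bp2 v) / φ (bp1 v), φ (Polynomial.C v.1.2) / φ (bp1 v), φ (Polynomial.C v.1.1) / φ (bp1 v))

theorem ae3_ne (v : (F × F) × F) : ae3 v ≠ 0 := by
  intro h
  have := congrArg (fun q => Polynomial.coeff q 0) h
  simp [ae3] at this

theorem bp1_ne (v : (F × F) × F) : bp1 v ≠ 0 := by
  intro h
  have := congrArg (fun q => Polynomial.coeff q 0) h
  simp [bp1] at this

theorem fi_inj (φ : Polynomial F →+* K) (hφ : Function.Injective φ) :
    Function.Injective (fun v : (F × F) × F => (fi φ v).1) := by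
  intro v w h
  have h3 : φ (ae3 v) ≠ 0 := (map_ne_zero_iff φ hφ).mpr (ae3_ne v)
  have h3' : φ (ae3 w) ≠ 0 := (map_ne_zero_iff φ hφ).mpr (ae3_ne w)
  simp only [fi] at h
  rw [div_eq_div_iff h3 h3', ← map_mul, ← map_mul] at h
  have h := hφ h
  have e : ∀ v w : (F × F) × F, ae4 v * ae3 w = Polynomial.C v.2 - Polynomial.X * Polynomial.C v.1.2 
      - Polynomial.X ^ 2 * Polynomial.C (v.2 * w.1.1) + Polynomial.X ^ 3 * Polynomial.C (v.1.2 * w.1.1) - Polynomial.X ^ 4 * Polynomial.C v.1.1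
      + Polynomial.X ^ 6 * Polynomial.C (v.1.1 * w.1.1) := by
    intro v w; simp only [ae3, ae4, map_mul]; ring
  rw [e, e] at h
  have c0 := congrArg (fun q => Polynomial.coeff q 0) h
  have c1 := congrArg (fun q => Polynomial.coeff q 1) h
  have c4 := congrArg (fun q => Polynomial.coeff q 4) h
  simp [-map_mul, -Polynomial.C_mul, Polynomial.coeff_mul_C, Polynomial.coeff_C, Polynomial.coeff_X_pow, Polynomial.coeff_X] at c0 c1 c4
  exact Prod.ext (Prod.ext c4 c1) c0

theorem fj_inj (φ : Polynomial F →+* K) (hφ : Function.Injective φ) :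
    Function.Injective (fun v : (F × F) × F => (fj φ v).1) := by
  intro v w h
  have h3 : φ (bp1 v) ≠ 0 := (map_ne_zero_iff φ hφ).mpr (bp1_ne v)
  have h3' : φ (bp1 w) ≠ 0 := (map_ne_zero_iff φ hφ).mpr (bp1_ne w)
  simp only [fj] at h
  rw [div_eq_div_iff h3 h3', ← map_mul, ← map_mul] at h
  have h := hφ h
  have e : ∀ v w : (F × F) × F, bp2 v * bp1 w = Polynomial.C v.2 - Polynomial.X * Polynomial.C (v.2 * w.1.1) 
      - Polynomial.X ^ 2 * Polynomial.C (v.1.2) + Polynomial.X ^ 3 * Polynomial.C (v.1.2 * w.1.1) - Polynomial.X ^ 4 * Polynomial.C v.1.1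
      + Polynomial.X ^ 5 * Polynomial.C (v.1.1 * w.1.1) := by
    intro v w; simp only [bp1, bp2, map_mul]; ring
  rw [e, e] at h
  have c0 := congrArg (fun q => Polynomial.coeff q 0) h
  have c1 := congrArg (fun q => Polynomial.coeff q 2) h
  have c4 := congrArg (fun q => Polynomial.coeff q 4) h
  simp [-map_mul, -Polynomial.C_mul, Polynomial.coeff_mul_C, Polynomial.coeff_C, Polynomial.coeff_X_pow, Polynomial.coeff_X] at c0 c1 c4
  exact Prod.ext (Prod.ext c4 c1) c0

theorem fij_inc (φ : Polynomial F →+* K) (hφ : Function.Injective φ) (v w : (F × F) × F) :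
    incR (fi φ v) (fj φ w) ↔ v.1.1 * w.2 + v.1.2 = w.1.1 * v.2 + w.1.2 := by
  have h3 : φ (ae3 v) ≠ 0 := (map_ne_zero_iff φ hφ).mpr (ae3_ne v)
  have h1 : φ (bp1 w) ≠ 0 := (map_ne_zero_iff φ hφ).mpr (bp1_ne w)
  have step : incR (fi φ v) (fj φ w) ↔ φ (Polynomial.C v.1.2 * bp1 w + Polynomial.C v.1.1 * bp2 w) = φ (Polynomial.C w.1.2 * ae3 v + Polynomial.C w.1.1 * ae4 v) := by
    simp only [incR, fi, fj, map_add, map_mul]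
    field_simp
  rw [step, hφ.eq_iff]
  have e : Polynomial.C v.1.2 * bp1 w + Polynomial.C v.1.1 * bp2 w - (Polynomial.C w.1.2 * ae3 v + Polynomial.C w.1.1 * ae4 v)
     = Polynomial.C (v.1.1 * w.2 + v.1.2 - (w.1.1 * v.2 + w.1.2)) := by
    simp only [ae3, ae4, bp1, bp2, map_add, map_sub, map_mul]; ring
  rw [← sub_eq_zero, e, Polynomial.C_eq_zero, sub_eq_zero]

theorem onB_fi (φ : Polynomial F →+* K) (hφ : Function.Injective φ) (v : (F × F) × F) (b : K × K × K × K) :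
    onB (fi φ v) b → φ (Polynomial.C v.1.2) = b.1 * φ (ae3 v) + b.2.2.1 * φ (ae4 v) ∧
      φ (Polynomial.C v.1.1) = b.2.1 * φ (ae3 v) + b.2.2.2 * φ (ae4 v) := by
  have h3 : φ (ae3 v) ≠ 0 := (map_ne_zero_iff φ hφ).mpr (ae3_ne v)
  simp only [onB, fi]
  intro ⟨h1, h2⟩
  field_simp at h1 h2
  exact ⟨by linear_combination h1, by linear_combination h2⟩

theorem share (φ : Polynomial F →+* K) (hφ : Function.Injective φ) (b : K × K × K × K) (v w u : (F × F) × F)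
    (hv : onB (fi φ v) b) (hw : onB (fi φ w) b) (hu : onB (fi φ u) b) (hne : v ≠ w) (hs : v.2 = w.2) :
    u.2 = v.2 ∧ (w.1.1 - v.1.1) * (u.1.2 - v.1.2) = (w.1.2 - v.1.2) * (u.1.1 - v.1.1) := by
  obtain ⟨α, β, γ, δ⟩ := b
  obtain ⟨⟨m, c⟩, a⟩ := v
  obtain ⟨⟨m', c'⟩, a'⟩ := w
  obtain ⟨⟨n, d⟩, g⟩ := u
  simp only at hs
  subst hs
  have hv := onB_fi φ hφ _ _ hv
  have hw := onB_fi φ hφ _ _ hw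
  have hu := onB_fi φ hφ _ _ hu
  simp only [ae3, ae4, map_sub, map_mul, map_one, map_pow] at hv hw hu
  set T := φ Polynomial.X with hT
  have hT0 : T ≠ 0 := (map_ne_zero_iff φ hφ).mpr Polynomial.X_ne_zero
  obtain ⟨ι, hι⟩ : ∃ ι : F →+* K, ι = φ.comp Polynomial.C := ⟨_, rfl⟩
  have hιa : ∀ x, φ (Polynomial.C x) = ι x := by intro x; rw [hι]; rfl
  have hιi : Function.Injective ι := by rw [hι]; exact hφ.comp Polynomial.C_injective
  simp only [hιa] at hv hw hu
  have indep : ∀ x y : F, T * ι x = ι y → x = 0 ∧ y = 0 := by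
    intro x y h
    rw [← hιa, ← hιa, hT, ← map_mul] at h
    have h := hφ h
    have c0 := congrArg (fun q => Polynomial.coeff q 0) h
    have c1 := congrArg (fun q => Polynomial.coeff q 1) h
    simp [Polynomial.coeff_C] at c0 c1
    exact ⟨c1, c0.symm⟩
  obtain ⟨v1, v2⟩ := hv
  obtain ⟨w1, w2⟩ := hw
  obtain ⟨u1, u2⟩ := hu
  have hbeta : ¬ (δ = 0 ∧ 1 + β * T ^ 2 = 0) := by
    rintro ⟨h1, h2⟩
    rw [h1] at v2
    have h3 : β = 0 := by linear_combination -v2 + ι m * h2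
    rw [h3] at h2
    simp at h2
  -- differences
  have D1 : (ι c' - ι c) * (1 + γ * T) + (α * T ^ 2 + γ * T ^ 4) * (ι m' - ι m) = 0 := by
    linear_combination w1 - v1
  have D2 : (ι m' - ι m) * (1 + β * T ^ 2 + δ * T ^ 4) + δ * T * (ι c' - ι c) = 0 := by
    linear_combination w2 - v2
  have d1 : (ι d - ι c) * (1 + γ * T) + (α * T ^ 2 + γ * T ^ 4) * (ι n - ι m) = γ * (ι g - ι a) := by
    linear_combination u1 - v1
  have d2 : (ι n - ι m) * (1 + β * T ^ 2 + δ * T ^ 4) + δ * T * (ι d - ι c) = δ * (ι g - ι a) := by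
    linear_combination u2 - v2
  by_cases hm : m' = m
  · have hc : c' ≠ c := by
      rintro rfl; exact hne (by rw [hm])
    have hc' : ι c' - ι c ≠ 0 := sub_ne_zero.mpr (fun h => hc (hιi h))
    rw [hm, sub_self, mul_zero, add_zero] at D1
    rw [hm, sub_self, zero_mul, zero_add] at D2
    have hg : 1 + γ * T = 0 := (mul_eq_zero.mp D1).resolve_left hc'
    have hδ : δ = 0 := by
      rcases mul_eq_zero.mp D2 with h | h
      · exact (mul_eq_zero.mp h).resolve_right hT0
      · exact absurd h hc'
    have hb1 : 1 + β * T ^ 2 ≠ 0 := fun h => hbeta ⟨hδ, h⟩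
    rw [hδ] at d2
    have hn : ι n - ι m = 0 := by
      apply (mul_eq_zero.mp (show (ι n - ι m) * (1 + β * T ^ 2) = 0 by linear_combination d2)).resolve_right hb1
    have hn' : n = m := hιi (sub_eq_zero.mp hn)
    rw [hn, hg, mul_zero, mul_zero, add_zero] at d1
    have hg0 : γ ≠ 0 := by rintro rfl; simp at hg
    have : ι g - ι a = 0 := (mul_eq_zero.mp d1.symm).resolve_left hg0
    refine ⟨hιi (sub_eq_zero.mp this), ?_⟩
    simp only [hm, hn']; ring
  · have hm' : ι m' - ι m ≠ 0 := sub_ne_zero.mpr (fun h => hm (hιi h))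
    set W := (m' - m) * (d - c) - (c' - c) * (n - m) with hW
    set V := (g - a) * (m' - m) with hV
    have hWι : ι W = (ι m' - ι m) * (ι d - ι c) - (ι c' - ι c) * (ι n - ι m) := by simp [hW]
    have hVι : ι V = (ι g - ι a) * (ι m' - ι m) := by simp [hV]
    have k2 : δ * (T * ι W - ι V) = 0 := by
      rw [hWι, hVι]; linear_combination (ι m' - ι m) * d2 - (ι n - ι m) * D2
    have k3 : T * ι W = ι V := by
      rcases mul_eq_zero.mp k2 with h | h
      · exfalso
        apply hbeta
        refine ⟨h, ?_⟩
        rw [h] at D2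
        apply (mul_eq_zero.mp (show (ι m' - ι m) * (1 + β * T ^ 2) = 0 by linear_combination D2)).resolve_left hm'
      · exact sub_eq_zero.mp h
    obtain ⟨hW0, hV0⟩ := indep _ _ k3
    constructor
    · rw [hV] at hV0
      exact sub_eq_zero.mp ((mul_eq_zero.mp hV0).resolve_right (sub_ne_zero.mpr hm))
    · exact sub_eq_zero.mp hW0

theorem quad_count (p : ℕ) (hp : p.Prime) (L : Finset (ZMod p × ZMod p)) (S : Finset (ZMod p)) (k l : ℕ) (hS : S.card ≤ k)
    (hL : ∀ (v : ZMod p × ZMod p) (r s : ZMod p), (r ≠ 0 ∨ s ≠ 0) → (L.filter (fun w => r * (w.2 - v.2) = s * (w.1 - v.1))).card ≤ k)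
    (hn : 27 * (L.card * S.card) < p ^ 2) (hl : L.card * S.card ≤ 4 ^ l) :
    ∑ w ∈ L ×ˢ S, ((L ×ˢ S).filter (fun v => v.1.1 * w.2 + v.1.2 = w.1.1 * v.2 + w.1.2)).card ≤ 
      20 * 2 ^ l * (L.card * S.card) + k * (L.card * S.card + 4 ^ l) + 50006 * 8 ^ l := by
  have : Fact p.Prime := ⟨hp⟩
  let φ : Polynomial (ZMod p) →+* RatFunc (ZMod p) := algebraMap _ _
  have hφ : Function.Injective φ := RatFunc.algebraMap_injective _
  have : CharP (RatFunc (ZMod p)) p := charP_of_injective_algebraMap (R := Polynomial (ZMod p)) hφ p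
  have fiI : Function.Injective (fi φ) := fun a b h => fi_inj φ hφ (congrArg Prod.fst h)
  have fjI : Function.Injective (fj φ) := fun a b h => fj_inj φ hφ (congrArg Prod.fst h)
  have main := rudnev (K := RatFunc (ZMod p)) hp k l ((L ×ˢ S).image (fi φ)) ((L ×ˢ S).image (fj φ)) ?_ ?_ ?_ ?_ ?_
  · rw [Finset.card_image_of_injective _ fjI, Finset.card_product] at main
    refine le_trans (le_of_eq ?_) main
    unfold incN degR
    rw [Finset.sum_image (fun a _ b _ h => fjI h)]
    apply Finset.sum_congr rfl
    intro w _
    rw [Finset.filter_image, Finset.card_image_of_injective _ fiI]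
    congr 1
    apply Finset.filter_congr
    intro v _
    rw [fij_inc φ hφ]
  · intro x hx y hy h
    simp only [Finset.coe_image, Set.mem_image] at hx hy
    obtain ⟨v, _, rfl⟩ := hx
    obtain ⟨w, _, rfl⟩ := hy
    rw [fi_inj φ hφ h]
  · intro x hx y hy h
    simp only [Finset.coe_image, Set.mem_image] at hx hy
    obtain ⟨v, _, rfl⟩ := hx
    obtain ⟨w, _, rfl⟩ := hy
    rw [fj_inj φ hφ h]
  · intro b
    rw [Finset.filter_image, Finset.card_image_of_injective _ fiI]
    by_cases hinj : Set.InjOn (fun v : (ZMod p × ZMod p) × ZMod p => v.2) ((L ×ˢ S).filter (fun v => onB (fi φ v) b))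
    · rw [← Finset.card_image_of_injOn hinj]
      refine le_trans (Finset.card_le_card ?_) hS
      intro x hx
      rw [Finset.mem_image] at hx
      obtain ⟨v, hv, rfl⟩ := hx
      exact (Finset.mem_product.mp (Finset.mem_filter.mp hv).1).2
    · unfold Set.InjOn at hinj
      push Not at hinj
      obtain ⟨v, hv, w, hw, hvw, hne⟩ := hinj
      have hv' := (Finset.mem_filter.mp hv).2
      have hw' := (Finset.mem_filter.mp hw).2
      have hsh : ∀ u ∈ (L ×ˢ S).filter (fun v => onB (fi φ v) b), _ := fun u hu => share φ hφ b v w u hv' hw' (Finset.mem_filter.mp hu).2 hne hvw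
      refine le_trans ?_ (hL v.1 (w.1.1 - v.1.1) (w.1.2 - v.1.2) ?_)
      · apply Finset.card_le_card_of_injOn (fun u => u.1)
        · intro u hu
          have h1 := hsh u hu
          have h2 := Finset.mem_product.mp (Finset.mem_filter.mp hu).1
          exact Finset.mem_filter.mpr ⟨h2.1, h1.2⟩
        · intro u hu u' hu' h
          exact Prod.ext h ((hsh u hu).1.trans (hsh u' hu').1.symm)
      · by_contra hcon
        push Not at hcon
        exact hne (Prod.ext (Prod.ext (sub_eq_zero.mp hcon.1).symm (sub_eq_zero.mp hcon.2).symm) hvw)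
  · rw [Finset.card_image_of_injective _ fiI, Finset.card_product]; exact hn
  · rw [Finset.card_image_of_injective _ fiI, Finset.card_product]; exact hl

end App

section App2
open scoped Classical

/-- number of incidences between the lines `y = v.1 x + v.2` and the grid `S × B` -/
noncomputable def incid {p : ℕ} (L : Finset (ZMod p × ZMod p)) (S B : Finset (ZMod p)) : ℕ :=
  ((L ×ˢ S).filter (fun v => v.1.1 * v.2 + v.1.2 ∈ B)).card

theorem incid_sq {p : ℕ} (L : Finset (ZMod p × ZMod p)) (S B : Finset (ZMod p)) :
    incid L S B ^ 2 ≤ B.card * ∑ w ∈ L ×ˢ S, ((L ×ˢ S).filter (fun v => v.1.1 * w.2 + v.1.2 = w.1.1 * v.2 + w.1.2)).card := by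
  let val : (ZMod p × ZMod p) × ZMod p → ZMod p := fun v => v.1.1 * v.2 + v.1.2
  let r : ZMod p → ℕ := fun b => ((L ×ˢ S).filter (fun v => val v = b)).card
  have h1 : incid L S B = ∑ b ∈ B, r b := by
    unfold incid
    rw [Finset.card_eq_sum_card_fiberwise (f := val) (t := B) (by
      intro v hv; exact (Finset.mem_filter.mp hv).2)]
    apply Finset.sum_congr rfl
    intro b hb
    rw [Finset.filter_filter]
    congr 1
    apply Finset.filter_congr
    intro v _
    constructor
    · intro h; exact h.2
    · intro h; exact ⟨by change val v ∈ B; rw [h]; exact hb, h⟩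
  have h2 : ∑ b ∈ B, r b ^ 2 ≤ ∑ q ∈ L ×ˢ S, r (val q) := by
    calc ∑ b ∈ B, r b ^ 2 = ∑ b ∈ B, ∑ q ∈ (L ×ˢ S).filter (fun v => val v = b), r (val q) := by
          apply Finset.sum_congr rfl
          intro b _
          rw [Finset.sum_congr rfl (g := fun _ => r b) (by intro q hq; rw [(Finset.mem_filter.mp hq).2])]
          rw [Finset.sum_const, smul_eq_mul, sq]
      _ = ∑ q ∈ (L ×ˢ S).filter (fun v => val v ∈ B), r (val q) :=
          Finset.sum_fiberwise_eq_sum_filter _ _ _ _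
      _ ≤ _ := Finset.sum_le_sum_of_subset (Finset.filter_subset _ _)
  have h3 : ∑ q ∈ L ×ˢ S, r (val q) = ∑ w ∈ L ×ˢ S, ((L ×ˢ S).filter (fun v => v.1.1 * w.2 + v.1.2 = w.1.1 * v.2 + w.1.2)).card := by
    simp only [r, val, Finset.card_filter]
    simp only [Finset.sum_product]
    have e1 : ∀ f : (ZMod p × ZMod p) → ZMod p → (ZMod p × ZMod p) → ZMod p → ℕ,
        ∑ l ∈ L, ∑ a ∈ S, ∑ l' ∈ L, ∑ a' ∈ S, f l a l' a' =
        ∑ l' ∈ L, ∑ a ∈ S, ∑ l ∈ L, ∑ a' ∈ S, f l a l' a' := by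
      intro f
      rw [Finset.sum_comm]
      conv_rhs => rw [Finset.sum_comm]
      apply Finset.sum_congr rfl
      intro a _
      rw [Finset.sum_comm]
    rw [e1]
    apply Finset.sum_congr rfl
    intro l _
    apply Finset.sum_congr rfl
    intro a _
    apply Finset.sum_congr rfl
    intro l' _
    apply Finset.sum_congr rfl
    intro a' _
    congr 1
    exact propext ⟨fun h => h.symm, fun h => h.symm⟩
  rw [h1, ← h3]
  exact (sq_sum_le_card_mul_sum_sq).trans (Nat.mul_le_mul_left _ h2)

theorem incid_rud (p : ℕ) (hp : p.Prime) (L : Finset (ZMod p × ZMod p)) (S B : Finset (ZMod p))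
    (k : ℕ) (hS : S.card ≤ k)
    (hL : ∀ (v : ZMod p × ZMod p) (r s : ZMod p), (r ≠ 0 ∨ s ≠ 0) →
      (L.filter (fun w => r * (w.2 - v.2) = s * (w.1 - v.1))).card ≤ k)
    (hn : 27 * (L.card * S.card) < p ^ 2) :
    (incid L S B : ℝ) ^ 2 ≤ 500000 * B.card *
      (Real.sqrt ((L.card : ℝ) * S.card) + k) * (L.card * S.card) := by
  rcases Nat.eq_zero_or_pos (L.card * S.card) with h0 | hpos
  · have : incid L S B = 0 := by
      unfold incid
      have : L ×ˢ S = ∅ := by rw [← Finset.card_eq_zero, Finset.card_product, h0]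
      rw [this]; simp
    have h0' : (L.card : ℝ) * S.card = 0 := by exact_mod_cast h0
    rw [this, h0']; simp
  · have hex : ∃ l : ℕ, L.card * S.card ≤ 4 ^ l :=
      ⟨L.card * S.card, (Nat.lt_pow_self (by norm_num)).le⟩
    obtain ⟨l, hl, hl4⟩ : ∃ l : ℕ, L.card * S.card ≤ 4 ^ l ∧ 4 ^ l ≤ 4 * (L.card * S.card) := by
      refine ⟨Nat.find hex, Nat.find_spec hex, ?_⟩
      rcases hk : Nat.find hex with _ | m
      · simp; omega
      · have := Nat.find_min hex (m := m) (by omega)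
        rw [pow_succ]; omega
    have hq := quad_count p hp L S k l hS hL hn hl
    have hs := incid_sq L S B
    set n : ℕ := L.card * S.card with hnd
    have hnr : (L.card : ℝ) * S.card = (n : ℝ) := by rw [hnd]; push_cast; ring
    rw [hnr]
    set t := Real.sqrt (n : ℝ) with ht
    have htn : t ^ 2 = n := Real.sq_sqrt (by positivity)
    have ht0 : 0 ≤ t := Real.sqrt_nonneg _
    have hl4r : ((2 : ℝ) ^ l) ^ 2 ≤ (2 * t) ^ 2 := by
      have : ((4 : ℝ) ^ l) ≤ 4 * n := by exact_mod_cast hl4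
      rw [mul_pow, htn, ← pow_mul, mul_comm, pow_mul]; norm_num; linarith
    have h2l : (2 : ℝ) ^ l ≤ 2 * t := by
      exact (abs_le_of_sq_le_sq' hl4r (by positivity)).2
    have hq' : ((∑ w ∈ L ×ˢ S, ((L ×ˢ S).filter (fun v => v.1.1 * w.2 + v.1.2 = w.1.1 * v.2 + w.1.2)).card : ℕ) : ℝ)
        ≤ 20 * 2 ^ l * n + k * (n + 4 ^ l) + 50006 * 8 ^ l := by exact_mod_cast hq
    have hs' : (incid L S B : ℝ) ^ 2 ≤ B.card * ((∑ w ∈ L ×ˢ S, ((L ×ˢ S).filter (fun v => v.1.1 * w.2 + v.1.2 = w.1.1 * v.2 + w.1.2)).card : ℕ) : ℝ) := by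
      exact_mod_cast hs
    have h4 : (4 : ℝ) ^ l ≤ 4 * n := by exact_mod_cast hl4
    have h8 : (8 : ℝ) ^ l ≤ 8 * t * n := by
      have : (8 : ℝ) ^ l = 2 ^ l * 4 ^ l := by rw [← mul_pow]; norm_num
      rw [this]
      calc (2 : ℝ) ^ l * 4 ^ l ≤ (2 * t) * (4 * n) := by gcongr
        _ = _ := by ring
    have hn0 : (0 : ℝ) ≤ n := by positivity
    have hk0 : (0 : ℝ) ≤ k := by positivity
    have : 20 * 2 ^ l * n + k * (n + 4 ^ l) + 50006 * 8 ^ l ≤ 500000 * (t + k) * (n : ℝ) := by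
      have e1 : (20 : ℝ) * 2 ^ l * n ≤ 20 * (2 * t) * n := by gcongr
      have e2 : (k : ℝ) * (n + 4 ^ l) ≤ k * (n + 4 * n) := by gcongr
      have e3 : 0 ≤ t * n := by positivity
      have e4 : 0 ≤ (k : ℝ) * n := by positivity
      nlinarith
    calc _ ≤ _ := hs'
      _ ≤ (B.card : ℝ) * (500000 * (t + k) * (n : ℝ)) := by gcongr; exact hq'.trans this
      _ = _ := by ring

theorem vinh (p : ℕ) (hp : p.Prime) (L : Finset (ZMod p × ZMod p)) (S B : Finset (ZMod p)) :
    ((incid L S B : ℝ) - L.card * (S.card * B.card) / p) ^ 2 ≤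
      p * (L.card * (S.card * B.card)) := by
  haveI : Fact p.Prime := ⟨hp⟩
  let Q := S ×ˢ B
  let f : (ZMod p × ZMod p) → (ZMod p × ZMod p) → ℝ := fun v q => if v.1 * q.1 + v.2 = q.2 then 1 else 0
  let i : (ZMod p × ZMod p) → ℝ := fun v => ∑ q ∈ Q, f v q
  have hp0 : (0 : ℝ) < p := by exact_mod_cast hp.pos
  have hQ : (Q.card : ℝ) = S.card * B.card := by simp [Q]
  have hinc : (incid L S B : ℝ) = ∑ v ∈ L, i v := by
    unfold incid
    rw [Finset.card_filter, Finset.sum_product]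
    push_cast
    apply Finset.sum_congr rfl
    intro v _
    simp only [i, Q, f]
    rw [Finset.sum_product]
    apply Finset.sum_congr rfl
    intro x _
    simp
  have h1 : ∀ q : ZMod p × ZMod p, ∑ v : ZMod p × ZMod p, f v q = p := by
    intro q
    rw [Fintype.sum_prod_type]
    have : ∀ x : ZMod p, ∑ y : ZMod p, f (x, y) q = 1 := by
      intro x
      simp only [f]
      rw [Finset.sum_eq_single (q.2 - x * q.1)]
      · simp
      · intro b _ hb
        rw [if_neg]
        intro h; apply hb; rw [← h]; ring
      · simp
    simp [this, ZMod.card]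
  have h2 : ∀ q q' : ZMod p × ZMod p, ∑ v : ZMod p × ZMod p, f v q * f v q' ≤ (if q = q' then (p : ℝ) else 0) + 1 := by
    intro q q'
    by_cases h : q = q'
    · subst h
      have : ∀ v, f v q * f v q = f v q := by
        intro v; simp [f]
      simp [this, h1]
    · have e : ∑ v : ZMod p × ZMod p, f v q * f v q' =
        ((Finset.univ.filter (fun v : ZMod p × ZMod p => v.1 * q.1 + v.2 = q.2 ∧ v.1 * q'.1 + v.2 = q'.2)).card : ℝ) := by
        rw [Finset.card_filter]
        push_cast
        apply Finset.sum_congr rfl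
        intro v _
        simp only [f]
        split_ifs <;> simp_all
      rw [e, if_neg h, zero_add]
      have : (Finset.univ.filter (fun v : ZMod p × ZMod p => v.1 * q.1 + v.2 = q.2 ∧ v.1 * q'.1 + v.2 = q'.2)).card ≤ 1 := by
        rw [Finset.card_le_one]
        intro v hv w hw
        simp only [Finset.mem_filter, Finset.mem_univ, true_and] at hv hw
        have e1 : (v.1 - w.1) * (q.1 - q'.1) = 0 := by
          linear_combination hv.1 - hv.2 - hw.1 + hw.2
        rcases mul_eq_zero.mp e1 with e2 | e2
        · have e3 : v.1 = w.1 := sub_eq_zero.mp e2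
          refine Prod.ext e3 ?_
          linear_combination hv.1 - hw.1 - q.1 * e3
        · exfalso
          apply h
          have e3 : q.1 = q'.1 := sub_eq_zero.mp e2
          refine Prod.ext e3 ?_
          linear_combination hv.2 - hv.1 + v.1 * e3
      exact_mod_cast this
  have hs1 : ∑ v : ZMod p × ZMod p, i v = p * Q.card := by
    simp only [i]
    rw [Finset.sum_comm]
    simp only [h1]
    simp; ring
  have hs2 : ∑ v : ZMod p × ZMod p, i v ^ 2 ≤ p * Q.card + (Q.card : ℝ) ^ 2 := by
    have : ∀ v, i v ^ 2 = ∑ q ∈ Q, ∑ q' ∈ Q, f v q * f v q' := by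
      intro v; rw [sq, Finset.sum_mul_sum]
    simp only [this]
    rw [Finset.sum_comm]
    calc _ = ∑ q ∈ Q, ∑ q' ∈ Q, ∑ v : ZMod p × ZMod p, f v q * f v q' := by
          apply Finset.sum_congr rfl; intro q _; rw [Finset.sum_comm]
      _ ≤ ∑ q ∈ Q, ∑ q' ∈ Q, ((if q = q' then (p : ℝ) else 0) + 1) := by
          apply Finset.sum_le_sum; intro q _; apply Finset.sum_le_sum; intro q' _; exact h2 q q'
      _ = ∑ q ∈ Q, ((p : ℝ) + Q.card) := by
          apply Finset.sum_congr rfl; intro q hq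
          rw [Finset.sum_add_distrib, Finset.sum_ite_eq]
          simp [hq]
      _ = _ := by simp; ring
  set c : ℝ := (Q.card : ℝ) / p with hc
  have hvar : ∑ v : ZMod p × ZMod p, (i v - c) ^ 2 ≤ p * Q.card := by
    have : ∀ v, (i v - c) ^ 2 = i v ^ 2 - 2 * c * i v + c ^ 2 := by intro v; ring
    simp only [this]
    rw [Finset.sum_add_distrib, Finset.sum_sub_distrib, ← Finset.mul_sum, hs1]
    simp only [Finset.sum_const, Finset.card_univ, Fintype.card_prod, ZMod.card, nsmul_eq_mul]
    push_cast
    have e1 : 2 * c * (p * Q.card) = 2 * (Q.card : ℝ) ^ 2 := by rw [hc]; field_simp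
    have e2 : (p : ℝ) * p * c ^ 2 = (Q.card : ℝ) ^ 2 := by rw [hc]; field_simp
    rw [e1, e2]; linarith
  have hcs : (∑ v ∈ L, (i v - c)) ^ 2 ≤ L.card * ∑ v ∈ L, (i v - c) ^ 2 := sq_sum_le_card_mul_sum_sq
  have hL : ∑ v ∈ L, (i v - c) ^ 2 ≤ p * Q.card :=
    (Finset.sum_le_sum_of_subset_of_nonneg (Finset.subset_univ L) (fun _ _ _ => sq_nonneg _)).trans hvar
  have e : (incid L S B : ℝ) - L.card * (S.card * B.card) / p = ∑ v ∈ L, (i v - c) := by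
    rw [Finset.sum_sub_distrib, ← hinc, hc, hQ]; simp; ring
  rw [e, ← hQ]
  calc _ ≤ _ := hcs
    _ ≤ (L.card : ℝ) * (p * Q.card) := by gcongr
    _ = _ := by ring

end App2

section App3
open scoped Classical

/-- The family of lines `y = m x + e`, `m ∈ Λ`, `e ∈ E m`. -/
noncomputable def lineFam {p : ℕ} [NeZero p] (Λ : Finset (ZMod p)) (E : ZMod p → Finset (ZMod p)) :
    Finset (ZMod p × ZMod p) :=
  (Λ ×ˢ Finset.univ).filter (fun v => v.2 ∈ E v.1)

theorem lineFam_card {p : ℕ} [NeZero p] (Λ : Finset (ZMod p)) (E : ZMod p → Finset (ZMod p)) :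
    (lineFam Λ E).card = ∑ m ∈ Λ, (E m).card := by
  unfold lineFam
  rw [Finset.card_filter, Finset.sum_product]
  apply Finset.sum_congr rfl
  intro m _
  simp

theorem lineFam_incid {p : ℕ} [NeZero p] (Λ : Finset (ZMod p)) (E : ZMod p → Finset (ZMod p))
    (S B : Finset (ZMod p)) :
    incid (lineFam Λ E) S B = ∑ m ∈ Λ, ∑ e ∈ E m, (S.filter (fun x => m * x + e ∈ B)).card := by
  unfold incid lineFam
  rw [Finset.card_filter, Finset.sum_product, Finset.sum_filter, Finset.sum_product]
  apply Finset.sum_congr rfl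
  intro m _
  rw [← Finset.sum_filter]
  simp only [Finset.filter_univ_mem]
  apply Finset.sum_congr rfl
  intro e _
  rw [Finset.card_filter]

theorem lineFam_coll {p : ℕ} [Fact p.Prime] (Λ : Finset (ZMod p)) (E : ZMod p → Finset (ZMod p))
    (x : ℕ) (hx : ∀ m ∈ Λ, (E m).card ≤ x) (v : ZMod p × ZMod p) (r s : ZMod p)
    (h : r ≠ 0 ∨ s ≠ 0) :
    ((lineFam Λ E).filter (fun w => r * (w.2 - v.2) = s * (w.1 - v.1))).card ≤ x + Λ.card := by
  by_cases hr : r = 0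
  · have hs : s ≠ 0 := by
      rcases h with h | h
      · exact absurd hr h
      · exact h
    by_cases hv : v.1 ∈ Λ
    · refine le_trans ?_ ((hx _ hv).trans (Nat.le_add_right _ _))
      have key : ∀ w ∈ (lineFam Λ E).filter (fun w => r * (w.2 - v.2) = s * (w.1 - v.1)), w.1 = v.1 := by
        intro w hw
        have := (Finset.mem_filter.mp hw).2
        rw [hr, zero_mul] at this
        rcases mul_eq_zero.mp this.symm with h1 | h1
        · exact absurd h1 hs
        · exact sub_eq_zero.mp h1
      apply Finset.card_le_card_of_injOn Prod.snd
      · intro w hw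
        have h1 := key w hw
        have h2 := (Finset.mem_filter.mp (Finset.mem_filter.mp hw).1).2
        rw [h1] at h2; exact h2
      · intro w hw w' hw' h1
        exact Prod.ext ((key w hw).trans (key w' hw').symm) h1
    · rw [Finset.card_eq_zero.mpr]
      · exact Nat.zero_le _
      · rw [Finset.filter_eq_empty_iff]
        intro w hw hc
        rw [hr, zero_mul] at hc
        rcases mul_eq_zero.mp hc.symm with h1 | h1
        · exact hs h1
        · apply hv
          rw [← sub_eq_zero.mp h1]
          exact (Finset.mem_product.mp (Finset.mem_filter.mp hw).1).1
  · refine le_trans ?_ (Nat.le_add_left _ _)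
    apply Finset.card_le_card_of_injOn Prod.fst
    · intro w hw
      exact (Finset.mem_product.mp (Finset.mem_filter.mp (Finset.mem_filter.mp hw).1).1).1
    · intro w hw w' hw' h1
      have e1 := (Finset.mem_filter.mp hw).2
      have e2 := (Finset.mem_filter.mp hw').2
      refine Prod.ext h1 ?_
      have : r * (w.2 - w'.2) = 0 := by
        have h1' : w.1 = w'.1 := h1
        rw [h1'] at e1
        linear_combination e1 - e2
      rcases mul_eq_zero.mp this with h2 | h2
      · exact absurd h2 hr
      · exact sub_eq_zero.mp h2

/-- pairs with quotient `m` -/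
noncomputable def RR {p : ℕ} (A : Finset (ZMod p)) (m : ZMod p) : Finset (ZMod p × ZMod p) :=
  (A ×ˢ A).filter (fun q => q.1 = m * q.2)

noncomputable def DD {p : ℕ} (A : Finset (ZMod p)) (m : ZMod p) : Finset (ZMod p) :=
  (A ×ˢ A).image (fun q => q.1 - m * q.2)

theorem rich_BB {p : ℕ} (A : Finset (ZMod p)) (m e : ZMod p) (he : e ∈ DD A m) :
    (RR A m).card ≤ ((A + A).filter (fun x => m * x + e ∈ A + A)).card := by
  obtain ⟨q, hq, rfl⟩ := Finset.mem_image.mp he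
  obtain ⟨hq1, hq2⟩ := Finset.mem_product.mp hq
  apply Finset.card_le_card_of_injOn (fun c => q.2 + c.2)
  · intro c hc
    obtain ⟨hc1, hc2⟩ := Finset.mem_filter.mp hc
    obtain ⟨hc3, hc4⟩ := Finset.mem_product.mp hc1
    refine Finset.mem_filter.mpr ⟨Finset.add_mem_add hq2 hc4, ?_⟩
    have : m * (q.2 + c.2) + (q.1 - m * q.2) = q.1 + c.1 := by rw [hc2]; ring
    rw [this]
    exact Finset.add_mem_add hq1 hc3
  · intro c hc d hd h
    have h2 : c.2 = d.2 := add_left_cancel h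
    refine Prod.ext ?_ h2
    rw [(Finset.mem_filter.mp hc).2, (Finset.mem_filter.mp hd).2, h2]

theorem rich_AA {p : ℕ} (A : Finset (ZMod p)) (m : ZMod p) :
    A.card ^ 2 ≤ ∑ e ∈ DD A m, (A.filter (fun x => m * x + e ∈ A)).card := by
  have : A.card ^ 2 = (A ×ˢ A).card := by rw [Finset.card_product, sq]
  rw [this, Finset.card_eq_sum_card_fiberwise (f := fun q : ZMod p × ZMod p => q.1 - m * q.2) (t := DD A m)
    (fun q hq => Finset.mem_image_of_mem _ hq)]
  apply Finset.sum_le_sum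
  intro e _
  apply Finset.card_le_card_of_injOn Prod.snd
  · intro q hq
    obtain ⟨h1, h2⟩ := Finset.mem_filter.mp hq
    obtain ⟨h3, h4⟩ := Finset.mem_product.mp h1
    refine Finset.mem_filter.mpr ⟨h4, ?_⟩
    rw [← h2]
    simpa using h3
  · intro q hq q' hq' h
    have h1 := (Finset.mem_filter.mp hq).2
    have h2 := (Finset.mem_filter.mp hq').2
    have h' : q.2 = q'.2 := h
    refine Prod.ext ?_ h'
    linear_combination h1 - h2 + m * h'

theorem num_H_rud (I N b t ν x : ℝ) (hI : t * N ≤ I) (hN : N = ν * x) (ht : 0 ≤ t) (hb : 0 ≤ b)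
    (hν : 0 < ν) (hx : 0 < x)
    (h : I ^ 2 ≤ 500000 * b * (Real.sqrt (N * b) + (x + ν)) * (N * b)) :
    ν * x * t ^ 4 ≤ 2250000000000 * b ^ 5 ∨ ν * t ^ 2 ≤ 2250000000000 * b ^ 2 ∨
      x * t ^ 2 ≤ 2250000000000 * b ^ 2 := by
  have hN0 : 0 < N := by rw [hN]; positivity
  set s := Real.sqrt (N * b) with hs
  have hs2 : s ^ 2 = N * b := Real.sq_sqrt (by positivity)
  have hs0 : 0 ≤ s := Real.sqrt_nonneg _
  have h1 : (t * N) ^ 2 ≤ 500000 * b * (s + (x + ν)) * (N * b) :=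
    (pow_le_pow_left₀ (by positivity) hI 2).trans h
  have h2 : t ^ 2 * N ≤ 500000 * b ^ 2 * (s + (x + ν)) := by
    refine le_of_mul_le_mul_right ?_ hN0
    nlinarith
  have hb2 : 0 ≤ b ^ 2 := by positivity
  rcases le_total x s with hxs | hxs
  · rcases le_total ν s with hνs | hνs
    · left
      have h3 : t ^ 2 * N ≤ 1500000 * b ^ 2 * s := by nlinarith
      have h4 : (t ^ 2 * N) ^ 2 ≤ (1500000 * b ^ 2 * s) ^ 2 := pow_le_pow_left₀ (by positivity) h3 2
      have h5 : (1500000 * b ^ 2 * s) ^ 2 = 2250000000000 * b ^ 5 * N := by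
        rw [mul_pow, hs2]; ring
      rw [h5] at h4
      rw [← hN]
      refine le_of_mul_le_mul_right ?_ hN0
      calc N * t ^ 4 * N = (t ^ 2 * N) ^ 2 := by ring
        _ ≤ _ := h4
    · right; right
      have h3 : t ^ 2 * N ≤ 1500000 * b ^ 2 * ν := by nlinarith
      rw [hN] at h3
      have h4 : x * t ^ 2 ≤ 1500000 * b ^ 2 := by
        refine le_of_mul_le_mul_right ?_ hν
        linarith
      linarith
  · rcases le_total ν x with hνs | hνs
    · right; left
      have h3 : t ^ 2 * N ≤ 1500000 * b ^ 2 * x := by nlinarith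
      rw [hN] at h3
      have h4 : ν * t ^ 2 ≤ 1500000 * b ^ 2 := by
        refine le_of_mul_le_mul_right ?_ hx
        linarith
      linarith
    · right; right
      have h3 : t ^ 2 * N ≤ 1500000 * b ^ 2 * ν := by nlinarith
      rw [hN] at h3
      have h4 : x * t ^ 2 ≤ 1500000 * b ^ 2 := by
        refine le_of_mul_le_mul_right ?_ hν
        linarith
      linarith

theorem num_H_vinh (I N b t p : ℝ) (hI : t * N ≤ I) (ht : 0 ≤ t) (hb : 0 ≤ b) (hN0 : 0 < N)
    (hp : 0 < p) (htp : 2 * b ^ 2 ≤ t * p) (hpN : p ^ 2 ≤ 27 * (N * b))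
    (h : (I - N * (b * b) / p) ^ 2 ≤ p * (N * (b * b))) :
    N * t ^ 4 ≤ 2250000000000 * b ^ 5 := by
  have h1 : N * (b * b) / p ≤ t * N / 2 := by
    rw [div_le_iff₀ hp]; nlinarith
  have h2 : (t * N / 2) ^ 2 ≤ (I - N * (b * b) / p) ^ 2 :=
    pow_le_pow_left₀ (by positivity) (by linarith) 2
  have h3 : N * t ^ 2 ≤ 4 * p * b ^ 2 := by
    refine le_of_mul_le_mul_right ?_ hN0
    nlinarith
  have h4 : (N * t ^ 2) ^ 2 ≤ (4 * p * b ^ 2) ^ 2 := pow_le_pow_left₀ (by positivity) h3 2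
  have h5 : (4 * p * b ^ 2) ^ 2 ≤ 16 * (27 * (N * b)) * b ^ 4 := by
    calc (4 * p * b ^ 2) ^ 2 = 16 * p ^ 2 * b ^ 4 := by ring
      _ ≤ _ := by gcongr
  have h6 : N * t ^ 4 ≤ 432 * b ^ 5 := by
    refine le_of_mul_le_mul_right ?_ hN0
    nlinarith
  have : 0 ≤ b ^ 5 := by positivity
  linarith

theorem main_H (p : ℕ) (hp : p.Prime) (A Λ : Finset (ZMod p)) (t x : ℕ)
    (hr : ∀ m ∈ Λ, t ≤ (RR A m).card) (hE : ∀ m ∈ Λ, x ≤ (DD A m).card)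
    (hx0 : 0 < x) (hbx : (A + A).card ≤ x) (htp : 2 * ((A + A).card : ℝ) ^ 2 ≤ t * p)
    (hΛ : 0 < Λ.card) :
    (Λ.card : ℝ) * x * t ^ 4 ≤ 2250000000000 * ((A + A).card : ℝ) ^ 5 ∨
    (Λ.card : ℝ) * t ^ 2 ≤ 2250000000000 * ((A + A).card : ℝ) ^ 2 ∨
    (x : ℝ) * t ^ 2 ≤ 2250000000000 * ((A + A).card : ℝ) ^ 2 := by
  have : Fact p.Prime := ⟨hp⟩
  have hch : ∀ m : ZMod p, ∃ E : Finset (ZMod p), m ∈ Λ → E ⊆ DD A m ∧ E.card = x := by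
    intro m
    by_cases hm : m ∈ Λ
    · obtain ⟨E, h1, h2⟩ := Finset.exists_subset_card_eq (hE m hm)
      exact ⟨E, fun _ => ⟨h1, h2⟩⟩
    · exact ⟨∅, fun h => absurd h hm⟩
  choose E hEE using hch
  set B := A + A with hB
  set L := lineFam Λ E with hL
  have hcard : L.card = Λ.card * x := by
    rw [hL, lineFam_card, Finset.sum_congr rfl (fun m hm => (hEE m hm).2)]
    simp
  have hinc : t * (Λ.card * x) ≤ incid L B B := by
    rw [hL, lineFam_incid]
    calc t * (Λ.card * x) = ∑ m ∈ Λ, ∑ e ∈ E m, t := by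
          rw [Finset.sum_congr rfl (g := fun _ => x * t) (fun m hm => by rw [Finset.sum_const, (hEE m hm).2, smul_eq_mul])]
          simp; ring
      _ ≤ _ := by
          apply Finset.sum_le_sum
          intro m hm
          apply Finset.sum_le_sum
          intro e he
          exact (hr m hm).trans (rich_BB A m e ((hEE m hm).1 he))
  have hincr : (t : ℝ) * (L.card : ℝ) ≤ incid L B B := by
    rw [hcard]; exact_mod_cast hinc
  have hLr : (L.card : ℝ) = (Λ.card : ℝ) * x := by rw [hcard]; push_cast; ring
  have hν : (0 : ℝ) < Λ.card := by exact_mod_cast hΛ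
  have hx : (0 : ℝ) < x := by exact_mod_cast hx0
  by_cases hn : 27 * (L.card * B.card) < p ^ 2
  · have h1 := incid_rud p hp L B B (x + Λ.card) (hbx.trans (Nat.le_add_right _ _))
      (fun v r s h => lineFam_coll Λ E x (fun m hm => (hEE m hm).2.le) v r s h) hn
    push_cast at h1
    exact num_H_rud _ _ _ _ _ _ hincr hLr (by positivity) (by positivity) hν hx h1
  · left
    have h1 := vinh p hp L B B
    have hN0 : (0 : ℝ) < L.card := by rw [hLr]; positivity
    rw [← hLr]
    refine num_H_vinh _ _ _ _ p hincr (by positivity) (by positivity) hN0 (by exact_mod_cast hp.pos) htp ?_ h1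
    exact_mod_cast not_lt.mp hn

theorem num_G_rud (I N a ν x : ℝ) (hI : a ^ 2 * ν ≤ I) (hN : N ≤ ν * x) (hN0 : 0 ≤ N) (ha : 0 < a)
    (hν : 0 < ν) (hx : 0 < x) (hax : a ≤ x) (hνa : ν ≤ a ^ 3)
    (h : I ^ 2 ≤ 500000 * a * (Real.sqrt (N * a) + (x + ν)) * (N * a)) :
    ν * a ^ 3 ≤ 1500000 ^ 3 * x ^ 3 := by
  set s := Real.sqrt (ν * x * a) with hs
  have hs2 : s ^ 2 = ν * x * a := Real.sq_sqrt (by positivity)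
  have hs0 : 0 ≤ s := Real.sqrt_nonneg _
  have hss : Real.sqrt (N * a) ≤ s := Real.sqrt_le_sqrt (by gcongr)
  have h1 : (a ^ 2 * ν) ^ 2 ≤ 500000 * a * (s + (x + ν)) * (ν * x * a) :=
    calc (a ^ 2 * ν) ^ 2 ≤ I ^ 2 := pow_le_pow_left₀ (by positivity) hI 2
      _ ≤ _ := h
      _ ≤ _ := by gcongr
  have h2 : a ^ 2 * ν ≤ 500000 * (s + (x + ν)) * x := by
    have : 0 < a ^ 2 * ν := by positivity
    refine le_of_mul_le_mul_right ?_ this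
    nlinarith
  have hx2 : 0 ≤ x ^ 2 := by positivity
  have hx3 : 0 ≤ x ^ 3 := by positivity
  rcases le_total (max x ν) s with hm | hm
  · have hxs : x ≤ s := (le_max_left _ _).trans hm
    have hνs : ν ≤ s := (le_max_right _ _).trans hm
    have h3 : a ^ 2 * ν ≤ 1500000 * s * x := by nlinarith
    have h4 : (a ^ 2 * ν) ^ 2 ≤ (1500000 * s * x) ^ 2 := pow_le_pow_left₀ (by positivity) h3 2
    have h5 : (1500000 * s * x) ^ 2 = 1500000 ^ 2 * x ^ 3 * (a * ν) := by
      rw [mul_pow, mul_pow, hs2]; ring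
    rw [h5] at h4
    have h6 : ν * a ^ 3 ≤ 1500000 ^ 2 * x ^ 3 := by
      have : 0 < a * ν := by positivity
      refine le_of_mul_le_mul_right ?_ this
      linarith
    linarith
  · rcases le_total ν x with hc | hc
    · rw [max_eq_left hc] at hm
      have h3 : a ^ 2 * ν ≤ 1500000 * x ^ 2 := by nlinarith
      have h4 : (a ^ 2 * ν) * a ≤ (1500000 * x ^ 2) * x := by gcongr
      linarith
    · rw [max_eq_right hc] at hm
      have h3 : a ^ 2 * ν ≤ 1500000 * x * ν := by nlinarith
      have h4 : a ^ 2 ≤ 1500000 * x := le_of_mul_le_mul_right h3 hν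
      calc ν * a ^ 3 ≤ a ^ 3 * a ^ 3 := by gcongr
        _ = (a ^ 2) ^ 3 := by ring
        _ ≤ (1500000 * x) ^ 3 := by gcongr
        _ = _ := by ring

theorem num_G_vinh (I N a ν x p : ℝ) (hI : a ^ 2 * ν ≤ I) (hN : N ≤ ν * x) (hN0 : 0 ≤ N) (ha : 0 < a)
    (hν : 0 < ν) (hx : 0 < x) (hp : 0 < p) (hxp : 2 * x ≤ p) (hpN : p ^ 2 ≤ 27 * (N * a))
    (h : (I - N * (a * a) / p) ^ 2 ≤ p * (N * (a * a))) :
    ν * a ^ 3 ≤ 1500000 ^ 3 * x ^ 3 := by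
  have h1 : N * (a * a) / p ≤ a ^ 2 * ν / 2 := by
    rw [div_le_iff₀ hp]
    calc N * (a * a) ≤ (ν * x) * (a * a) := by gcongr
      _ = (a ^ 2 * ν / 2) * (2 * x) := by ring
      _ ≤ _ := by gcongr
  have h2 : (a ^ 2 * ν / 2) ^ 2 ≤ (I - N * (a * a) / p) ^ 2 :=
    pow_le_pow_left₀ (by positivity) (by linarith) 2
  have h3 : ν * a ^ 2 ≤ 4 * p * x := by
    have : 0 < a ^ 2 * ν := by positivity
    refine le_of_mul_le_mul_right ?_ this
    have : p * (N * (a * a)) ≤ p * ((ν * x) * (a * a)) := by gcongr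
    nlinarith
  have h4 : (ν * a ^ 2) ^ 2 ≤ (4 * p * x) ^ 2 := pow_le_pow_left₀ (by positivity) h3 2
  have h5 : (4 * p * x) ^ 2 ≤ 16 * (27 * ((ν * x) * a)) * x ^ 2 := by
    calc (4 * p * x) ^ 2 = 16 * p ^ 2 * x ^ 2 := by ring
      _ ≤ 16 * (27 * (N * a)) * x ^ 2 := by gcongr
      _ ≤ _ := by gcongr
  have h6 : ν * a ^ 3 ≤ 432 * x ^ 3 := by
    have : 0 < a * ν := by positivity
    refine le_of_mul_le_mul_right ?_ this
    linarith
  have : 0 ≤ x ^ 3 := by positivity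
  linarith

theorem main_G (p : ℕ) (hp : p.Prime) (A Λ : Finset (ZMod p)) (x : ℕ)
    (hE : ∀ m ∈ Λ, (DD A m).card ≤ x) (hA : 0 < A.card)
    (hx0 : 0 < x) (hbx : A.card ≤ x) (hxp : 2 * (x : ℝ) ≤ p) (hνa : Λ.card ≤ A.card ^ 3)
    (hΛ : 0 < Λ.card) :
    (Λ.card : ℝ) * (A.card : ℝ) ^ 3 ≤ 1500000 ^ 3 * (x : ℝ) ^ 3 := by
  have : Fact p.Prime := ⟨hp⟩
  set L := lineFam Λ (DD A) with hL
  have hcard : L.card ≤ Λ.card * x := by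
    rw [hL, lineFam_card]
    refine (Finset.sum_le_sum hE).trans ?_
    simp
  have hinc : A.card ^ 2 * Λ.card ≤ incid L A A := by
    rw [hL, lineFam_incid]
    calc A.card ^ 2 * Λ.card = ∑ m ∈ Λ, A.card ^ 2 := by simp; ring
      _ ≤ _ := Finset.sum_le_sum (fun m _ => rich_AA A m)
  have hincr : (A.card : ℝ) ^ 2 * (Λ.card : ℝ) ≤ incid L A A := by exact_mod_cast hinc
  have hLr : (L.card : ℝ) ≤ (Λ.card : ℝ) * x := by exact_mod_cast hcard
  have hν : (0 : ℝ) < Λ.card := by exact_mod_cast hΛ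
  have ha : (0 : ℝ) < A.card := by exact_mod_cast hA
  have hx : (0 : ℝ) < x := by exact_mod_cast hx0
  by_cases hn : 27 * (L.card * A.card) < p ^ 2
  · have h1 := incid_rud p hp L A A (x + Λ.card) (hbx.trans (Nat.le_add_right _ _))
      (fun v r s h => lineFam_coll Λ (DD A) x hE v r s h) hn
    push_cast at h1
    exact num_G_rud _ _ _ _ _ hincr hLr (by positivity) ha hν hx (by exact_mod_cast hbx) (by exact_mod_cast hνa) h1
  · have h1 := vinh p hp L A A
    refine num_G_vinh _ _ _ _ _ p hincr hLr (by positivity) ha hν hx (by exact_mod_cast hp.pos) hxp ?_ h1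
    exact_mod_cast not_lt.mp hn

end App3

section App4
open scoped Classical

theorem RR_card_le {p : ℕ} (A : Finset (ZMod p)) (m : ZMod p) : (RR A m).card ≤ A.card := by
  apply Finset.card_le_card_of_injOn Prod.snd
  · intro q hq
    exact (Finset.mem_product.mp (Finset.mem_filter.mp hq).1).2
  · intro c hc d hd h
    have h2 : c.2 = d.2 := h
    refine Prod.ext ?_ h2
    rw [(Finset.mem_filter.mp hc).2, (Finset.mem_filter.mp hd).2, h2]

theorem RR_sum {p : ℕ} [Fact p.Prime] (A : Finset (ZMod p)) (h0 : (0 : ZMod p) ∉ A) :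
    ∑ m : ZMod p, (RR A m).card = A.card ^ 2 := by
  have : A.card ^ 2 = (A ×ˢ A).card := by rw [Finset.card_product, sq]
  rw [this, Finset.card_eq_sum_card_fiberwise (f := fun q : ZMod p × ZMod p => q.1 / q.2) (t := Finset.univ)
    (fun q hq => Finset.mem_coe.mpr (Finset.mem_univ _))]
  apply Finset.sum_congr rfl
  intro m _
  unfold RR
  congr 1
  apply Finset.filter_congr
  intro q hq
  have hq2 : q.2 ≠ 0 := fun h => h0 (h ▸ (Finset.mem_product.mp hq).2)
  rw [div_eq_iff hq2]

theorem level_bound (p : ℕ) (hp : p.Prime) (A : Finset (ZMod p)) (h0 : (0 : ZMod p) ∉ A)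
    (u : ℝ) (hu : 1 ≤ u) (hub : ((A + A).card : ℝ) = u ^ 4 * A.card)
    (hpa : (A.card : ℝ) ^ 3 * u ≤ (p : ℝ) ^ 2) [Fact p.Prime] (t : ℕ) (ht1 : 1 ≤ t) (hta : t ≤ A.card)
    (htW : 16 * u ^ 15 * A.card ≤ (t : ℝ) ^ 2) :
    ((Finset.univ.filter (fun m : ZMod p => t ≤ (RR A m).card)).card : ℝ) * (t : ℝ) ^ 3 ≤
      (2250000000000 ^ 3 + 8 * 1500000 ^ 3) * (u ^ 15 * (A.card : ℝ) ^ 3) := by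
  have : Fact p.Prime := ⟨hp⟩
  set Λ := Finset.univ.filter (fun m : ZMod p => t ≤ (RR A m).card) with hΛ
  have hν : Λ.card ≤ A.card ^ 2 := by
    have h1 : ∑ m ∈ Λ, (RR A m).card ≤ A.card ^ 2 := by
      rw [← RR_sum A h0]
      exact Finset.sum_le_sum_of_subset (Finset.subset_univ Λ)
    calc Λ.card = ∑ m ∈ Λ, 1 := by simp
      _ ≤ ∑ m ∈ Λ, (RR A m).card := Finset.sum_le_sum (fun m hm => ht1.trans (Finset.mem_filter.mp hm).2)
      _ ≤ _ := h1
  have ha1 : 1 ≤ A.card := ht1.trans hta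
  set a : ℝ := (A.card : ℝ) with ha
  have ha1r : (1 : ℝ) ≤ a := by rw [ha]; exact_mod_cast ha1
  have htr : (1 : ℝ) ≤ t := by exact_mod_cast ht1
  have htar : (t : ℝ) ≤ a := by rw [ha]; exact_mod_cast hta
  have ha0 : 0 < a := by linarith
  have ht0 : (0 : ℝ) < t := by linarith
  have hu0 : 0 < u := by linarith
  have hp0 : (0 : ℝ) < p := by exact_mod_cast hp.pos
  set X : ℝ := u ^ 5 * a ^ 2 / t with hX
  have hXt : X * t = u ^ 5 * a ^ 2 := by rw [hX]; field_simp
  have hX0 : 0 < X := by rw [hX]; positivity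
  have hbX : u ^ 4 * a ≤ X := by
    rw [hX, le_div_iff₀ ht0]
    calc u ^ 4 * a * t ≤ u ^ 4 * a * a := by gcongr
      _ = u ^ 4 * 1 * a ^ 2 := by ring
      _ ≤ u ^ 4 * u * a ^ 2 := by gcongr
      _ = _ := by ring
  have haX : a ≤ X := by
    refine le_trans ?_ hbX
    calc a = 1 * a := by ring
      _ ≤ _ := by gcongr; exact one_le_pow₀ hu
  set x : ℕ := ⌈X⌉₊ with hx
  have hxX : X ≤ x := Nat.le_ceil X
  have hxX2 : (x : ℝ) ≤ 2 * X := by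
    have := Nat.ceil_lt_add_one hX0.le
    rw [← hx] at this
    linarith
  have hx0 : 0 < x := by
    have : (0 : ℝ) < x := by linarith
    exact_mod_cast this
  have hbx : (A + A).card ≤ x := by
    have : ((A + A).card : ℝ) ≤ x := by rw [hub]; linarith
    exact_mod_cast this
  have hax : A.card ≤ x := by
    have : (A.card : ℝ) ≤ x := by rw [← ha]; linarith
    exact_mod_cast this
  have htp2 : (4 * (u ^ 8 * a ^ 2)) ^ 2 ≤ (t * p : ℝ) ^ 2 := by
    calc (4 * (u ^ 8 * a ^ 2)) ^ 2 = (16 * u ^ 15 * a) * (a ^ 3 * u) := by ring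
      _ ≤ (t : ℝ) ^ 2 * (p : ℝ) ^ 2 := by gcongr
      _ = _ := by ring
  have htp4 : 4 * (u ^ 8 * a ^ 2) ≤ (t * p : ℝ) := (abs_le_of_sq_le_sq' htp2 (by positivity)).2
  have htp : 2 * ((A + A).card : ℝ) ^ 2 ≤ t * p := by
    rw [hub]
    have : 0 ≤ u ^ 8 * a ^ 2 := by positivity
    calc 2 * (u ^ 4 * a) ^ 2 = 2 * (u ^ 8 * a ^ 2) := by ring
      _ ≤ _ := by linarith
  have hxp : 2 * (x : ℝ) ≤ p := by
    have h1 : 4 * X ≤ p := by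
      refine le_of_mul_le_mul_right ?_ ht0
      calc 4 * X * t = 4 * (u ^ 5 * a ^ 2) := by rw [mul_assoc, hXt]
        _ ≤ 4 * (u ^ 8 * a ^ 2) := by gcongr; norm_num
        _ ≤ _ := by linarith
    linarith
  set H := Λ.filter (fun m => x ≤ (DD A m).card) with hH
  set G := Λ.filter (fun m => ¬ x ≤ (DD A m).card) with hG
  have hHG : H.card + G.card = Λ.card := Finset.card_filter_add_card_filter_not _
  have hu3 : ∀ n ≤ 15, u ^ n ≤ u ^ 15 := fun n hn => pow_le_pow_right₀ hu hn
  have hM0 : 0 ≤ u ^ 15 * a ^ 3 := by positivity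
  have hboundH : (H.card : ℝ) * (t : ℝ) ^ 3 ≤ 2250000000000 ^ 3 * (u ^ 15 * a ^ 3) := by
    rcases Nat.eq_zero_or_pos H.card with hz | hz
    · rw [hz]; push_cast; rw [zero_mul]; positivity
    have hxt : u ^ 5 * a ^ 2 ≤ x * t := by rw [← hXt]; gcongr
    rcases main_H p hp A H t x (fun m hm => (Finset.mem_filter.mp (Finset.mem_filter.mp hm).1).2)
      (fun m hm => (Finset.mem_filter.mp hm).2) hx0 hbx htp hz with h | h | h
    · rw [hub] at h
      have h1 : (H.card : ℝ) * (t : ℝ) ^ 3 * (u ^ 5 * a ^ 2) ≤ 2250000000000 * (u ^ 15 * a ^ 3) * (u ^ 5 * a ^ 2) := by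
        calc (H.card : ℝ) * (t : ℝ) ^ 3 * (u ^ 5 * a ^ 2) ≤ (H.card : ℝ) * (t : ℝ) ^ 3 * (x * t) := by gcongr
          _ = (H.card : ℝ) * x * t ^ 4 := by ring
          _ ≤ _ := h
          _ = _ := by ring
      have h2 := le_of_mul_le_mul_right h1 (by positivity)
      linarith
    · rw [hub] at h
      have : (H.card : ℝ) * (t : ℝ) ^ 3 ≤ 2250000000000 * (u ^ 15 * a ^ 3) := by
        calc (H.card : ℝ) * (t : ℝ) ^ 3 = (H.card : ℝ) * (t : ℝ) ^ 2 * t := by ring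
          _ ≤ (2250000000000 * (u ^ 4 * a) ^ 2) * a := by gcongr
          _ = 2250000000000 * (u ^ 8 * a ^ 3) := by ring
          _ ≤ _ := by gcongr; norm_num
      linarith
    · rw [hub] at h
      have h1 : (t : ℝ) * (u ^ 5 * a ^ 2) ≤ 2250000000000 * u ^ 3 * (u ^ 5 * a ^ 2) := by
        calc (t : ℝ) * (u ^ 5 * a ^ 2) ≤ t * (x * t) := by gcongr
          _ = x * t ^ 2 := by ring
          _ ≤ _ := h
          _ = _ := by ring
      have h2 : (t : ℝ) ≤ 2250000000000 * u ^ 3 := le_of_mul_le_mul_right h1 (by positivity)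
      have h3 : (H.card : ℝ) ≤ a ^ 3 := by
        calc (H.card : ℝ) ≤ (Λ.card : ℝ) := by exact_mod_cast (by omega)
          _ ≤ a ^ 2 := by rw [ha]; exact_mod_cast hν
          _ ≤ a ^ 3 := pow_le_pow_right₀ ha1r (by norm_num)
      calc (H.card : ℝ) * (t : ℝ) ^ 3 ≤ a ^ 3 * (2250000000000 * u ^ 3) ^ 3 := by gcongr
        _ = 2250000000000 ^ 3 * (u ^ 9 * a ^ 3) := by ring
        _ ≤ _ := by gcongr; norm_num
  have hboundG : (G.card : ℝ) * (t : ℝ) ^ 3 ≤ 8 * 1500000 ^ 3 * (u ^ 15 * a ^ 3) := by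
    rcases Nat.eq_zero_or_pos G.card with hz | hz
    · rw [hz]; push_cast; rw [zero_mul]; positivity
    have h := main_G p hp A G x (fun m hm => (not_le.mp (Finset.mem_filter.mp hm).2).le) ha1 hx0 hax hxp
      (by
        have : A.card ^ 2 ≤ A.card ^ 3 := Nat.pow_le_pow_right ha1 (by norm_num)
        omega) hz
    rw [← ha] at h
    have hxt : x * t ≤ 2 * (u ^ 5 * a ^ 2) := by
      rw [← hXt, ← mul_assoc]; gcongr
    have h1 : (G.card : ℝ) * (t : ℝ) ^ 3 * a ^ 3 ≤ 8 * 1500000 ^ 3 * (u ^ 15 * a ^ 3) * a ^ 3 := by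
      calc (G.card : ℝ) * (t : ℝ) ^ 3 * a ^ 3 = ((G.card : ℝ) * a ^ 3) * t ^ 3 := by ring
        _ ≤ (1500000 ^ 3 * (x : ℝ) ^ 3) * t ^ 3 := by gcongr
        _ = 1500000 ^ 3 * (x * t) ^ 3 := by ring
        _ ≤ 1500000 ^ 3 * (2 * (u ^ 5 * a ^ 2)) ^ 3 := by gcongr
        _ = _ := by ring
    exact le_of_mul_le_mul_right h1 (by positivity)
  have hHGr : (Λ.card : ℝ) = H.card + G.card := by exact_mod_cast hHG.symm
  rw [hHGr]
  linarith

theorem cube_le_sum (r : ℕ) : (r : ℝ) ^ 3 ≤ ∑ t ∈ Finset.range r, 3 * ((t : ℝ) + 1) ^ 2 := by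
  induction r with
  | zero => simp
  | succ n ih =>
    rw [Finset.sum_range_succ]
    push_cast
    have : (0 : ℝ) ≤ n := by positivity
    nlinarith

theorem sum_cubes (p : ℕ) (hp : p.Prime) [Fact p.Prime] (A : Finset (ZMod p)) (h0 : (0 : ZMod p) ∉ A)
    (u : ℝ) (hu : 1 ≤ u) (hub : ((A + A).card : ℝ) = u ^ 4 * A.card)
    (hpa : (A.card : ℝ) ^ 3 * u ≤ (p : ℝ) ^ 2) :
    ∑ m : ZMod p, ((RR A m).card : ℝ) ^ 3 ≤
      (u ^ 15 * (A.card : ℝ) ^ 3) * (48 + 3 * (2250000000000 ^ 3 + 8 * 1500000 ^ 3) * (1 + Real.log A.card)) := by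
  have : Fact p.Prime := ⟨hp⟩
  set a := A.card with ha
  set W : ℝ := 16 * u ^ 15 * a with hW
  have hW0 : 0 ≤ W := by rw [hW]; positivity
  set C : ℝ := 2250000000000 ^ 3 + 8 * 1500000 ^ 3 with hC
  have hC0 : 0 ≤ C := by rw [hC]; positivity
  set M : ℝ := u ^ 15 * (a : ℝ) ^ 3 with hM
  have hM0 : 0 ≤ M := by rw [hM]; positivity
  have e1 : ∀ m : ZMod p, ((RR A m).card : ℝ) ^ 3 ≤ 3 * W * (RR A m).card +
      ∑ t ∈ Finset.range a, (if W ≤ ((t : ℝ) + 1) ^ 2 then (if t + 1 ≤ (RR A m).card then 3 * ((t : ℝ) + 1) ^ 2 else 0) else 0) := by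
    intro m
    refine (cube_le_sum _).trans ?_
    set r := (RR A m).card with hr
    have hra : r ≤ a := RR_card_le A m
    have s1 : ∑ t ∈ Finset.range r, (if W ≤ ((t : ℝ) + 1) ^ 2 then 3 * ((t : ℝ) + 1) ^ 2 else 0) ≤
        ∑ t ∈ Finset.range a, (if W ≤ ((t : ℝ) + 1) ^ 2 then (if t + 1 ≤ r then 3 * ((t : ℝ) + 1) ^ 2 else 0) else 0) := by
      rw [Finset.sum_congr rfl (g := fun t : ℕ => if W ≤ ((t : ℝ) + 1) ^ 2 then (if t + 1 ≤ r then 3 * ((t : ℝ) + 1) ^ 2 else 0) else 0)]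
      · apply Finset.sum_le_sum_of_subset_of_nonneg
        · exact Finset.range_subset_range.mpr hra
        · intro t _ _
          split_ifs <;> positivity
      · intro t ht
        have : t + 1 ≤ r := Finset.mem_range.mp ht
        simp [this]
    have s2 : ∑ t ∈ Finset.range r, 3 * ((t : ℝ) + 1) ^ 2 ≤ ∑ t ∈ Finset.range r, (3 * W + (if W ≤ ((t : ℝ) + 1) ^ 2 then 3 * ((t : ℝ) + 1) ^ 2 else 0)) := by
      apply Finset.sum_le_sum
      intro t _
      split_ifs with h
      · linarith
      · linarith [not_le.mp h]
    rw [Finset.sum_add_distrib] at s2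
    have s3 : ∑ t ∈ Finset.range r, 3 * W = 3 * W * r := by simp; ring
    linarith
  have e2 : ∀ t ∈ Finset.range a, ∑ m : ZMod p, (if W ≤ ((t : ℝ) + 1) ^ 2 then (if t + 1 ≤ (RR A m).card then 3 * ((t : ℝ) + 1) ^ 2 else 0) else 0)
      ≤ 3 * C * M * ((t : ℝ) + 1)⁻¹ := by
    intro t ht
    have hta : t + 1 ≤ a := Finset.mem_range.mp ht
    by_cases h : W ≤ ((t : ℝ) + 1) ^ 2
    · simp only [if_pos h]
      rw [← Finset.sum_filter, Finset.sum_const, nsmul_eq_mul]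
      have := level_bound p hp A h0 u hu hub hpa (t + 1) (by omega) hta (by push_cast; exact h)
      push_cast at this
      have hpos : (0 : ℝ) < (t : ℝ) + 1 := by positivity
      rw [← div_eq_mul_inv, le_div_iff₀ hpos]
      nlinarith
    · simp only [if_neg h]
      rw [Finset.sum_const_zero]
      positivity
  have hsum : ∑ m : ZMod p, ((RR A m).card : ℝ) = (a : ℝ) ^ 2 := by
    have := RR_sum A h0
    rw [ha]
    rw [← Nat.cast_sum, ← Nat.cast_pow]
    rw [← this]
  have hharm : ∑ t ∈ Finset.range a, ((t : ℝ) + 1)⁻¹ ≤ 1 + Real.log a := by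
    have := harmonic_le_one_add_log a
    unfold harmonic at this
    push_cast at this
    exact this
  calc ∑ m : ZMod p, ((RR A m).card : ℝ) ^ 3 ≤ ∑ m : ZMod p, (3 * W * (RR A m).card +
      ∑ t ∈ Finset.range a, (if W ≤ ((t : ℝ) + 1) ^ 2 then (if t + 1 ≤ (RR A m).card then 3 * ((t : ℝ) + 1) ^ 2 else 0) else 0)) :=
        Finset.sum_le_sum (fun m _ => e1 m)
    _ = 3 * W * a ^ 2 + ∑ t ∈ Finset.range a, ∑ m : ZMod p, (if W ≤ ((t : ℝ) + 1) ^ 2 then (if t + 1 ≤ (RR A m).card then 3 * ((t : ℝ) + 1) ^ 2 else 0) else 0) := by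
        rw [Finset.sum_add_distrib, ← Finset.mul_sum, hsum, Finset.sum_comm]
    _ ≤ 3 * W * a ^ 2 + ∑ t ∈ Finset.range a, 3 * C * M * ((t : ℝ) + 1)⁻¹ := by
        gcongr with t ht
        exact e2 t ht
    _ = 3 * W * a ^ 2 + 3 * C * M * ∑ t ∈ Finset.range a, ((t : ℝ) + 1)⁻¹ := by rw [Finset.mul_sum]
    _ ≤ 3 * W * a ^ 2 + 3 * C * M * (1 + Real.log a) := by gcongr
    _ = _ := by rw [hW, hM]; ring

theorem energy_le (p : ℕ) (hp : p.Prime) [Fact p.Prime] (A : Finset (ZMod p)) (h0 : (0 : ZMod p) ∉ A)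
    (T : Finset (ZMod p × ZMod p × ZMod p × ZMod p × ZMod p × ZMod p))
    (hT : ∀ t ∈ T, t ∈ A ×ˢ A ×ˢ A ×ˢ A ×ˢ A ×ˢ A ∧
      t.1 * t.2.2.2.2.1 = t.2.1 * t.2.2.2.1 ∧ t.2.1 * t.2.2.2.2.2 = t.2.2.1 * t.2.2.2.2.1) :
    T.card ≤ ∑ m : ZMod p, (RR A m).card ^ 3 := by
  have : Fact p.Prime := ⟨hp⟩
  rw [Finset.card_eq_sum_card_fiberwise (f := fun t => t.1 / t.2.2.2.1) (t := Finset.univ)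
    (fun q hq => Finset.mem_coe.mpr (Finset.mem_univ _))]
  apply Finset.sum_le_sum
  intro m _
  have : (RR A m).card ^ 3 = (RR A m ×ˢ RR A m ×ˢ RR A m).card := by
    simp only [Finset.card_product]; ring
  rw [this]
  apply Finset.card_le_card_of_injOn (fun t => ((t.1, t.2.2.2.1), (t.2.1, t.2.2.2.2.1), (t.2.2.1, t.2.2.2.2.2)))
  · rintro ⟨x1, x2, x3, y1, y2, y3⟩ ht
    obtain ⟨ht1, ht2⟩ := Finset.mem_filter.mp ht
    obtain ⟨hm, e1, e2⟩ := hT _ ht1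
    simp only [Finset.mem_product] at hm
    obtain ⟨hx1, hx2, hx3, hy1, hy2, hy3⟩ := hm
    simp only at e1 e2 ht2
    have n1 : y1 ≠ 0 := fun h => h0 (h ▸ hy1)
    have n2 : y2 ≠ 0 := fun h => h0 (h ▸ hy2)
    have f1 : x1 = m * y1 := by rw [← ht2]; field_simp
    have f2 : x2 = m * y2 := by
      apply mul_right_cancel₀ n1
      rw [← e1, f1]; ring
    have f3 : x3 = m * y3 := by
      apply mul_right_cancel₀ n2
      rw [← e2, f2]; ring
    simp only [RR, Finset.coe_product, Finset.coe_filter, Set.mem_prod, Set.mem_ofPred_eq, Finset.mem_product]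
    exact ⟨⟨⟨hx1, hy1⟩, f1⟩, ⟨⟨hx2, hy2⟩, f2⟩, ⟨hx3, hy3⟩, f3⟩
  · rintro ⟨x1, x2, x3, y1, y2, y3⟩ _ ⟨x1', x2', x3', y1', y2', y3'⟩ _ h
    simp only [Prod.mk.injEq] at h ⊢
    tauto

theorem num_fin (l : ℝ) (h : 0.69 ≤ l) :
    48 + 3 * (2250000000000 ^ 3 + 8 * 1500000 ^ 3) * (1 + l) ≤ 10 ^ 45 * l := by
  norm_num
  linarith

theorem final_bound (p : ℕ) (hp : p.Prime) (A : Finset (ZMod p)) (h0 : (0 : ZMod p) ∉ A)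
    (h2 : 2 ≤ A.card) (n : ℕ) (hn : n = (A + A).card) (hc : (A.card : ℝ) ^ 11 * (n : ℝ) ≤ (p : ℝ) ^ 8)
    (T : Finset (ZMod p × ZMod p × ZMod p × ZMod p × ZMod p × ZMod p))
    (hT : ∀ t ∈ T, t ∈ A ×ˢ A ×ˢ A ×ˢ A ×ˢ A ×ˢ A ∧
      t.1 * t.2.2.2.2.1 = t.2.1 * t.2.2.2.1 ∧ t.2.1 * t.2.2.2.2.2 = t.2.2.1 * t.2.2.2.2.1) :
    (T.card : ℝ) ≤ (10 ^ 45 : ℝ) * (n : ℝ) ^ ((15 : ℝ) / 4) * (A.card : ℝ) ^ (-(3 : ℝ) / 4) *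
                Real.log A.card := by
  have : Fact p.Prime := ⟨hp⟩
  have hA : A.Nonempty := Finset.card_pos.mp (by omega)
  have hle : A.card ≤ n := by rw [hn]; exact Finset.card_le_card_add_left hA
  have ha0 : (0 : ℝ) < A.card := by exact_mod_cast (by omega)
  have hn0 : (0 : ℝ) < n := by exact_mod_cast (by omega)
  have hler : (A.card : ℝ) ≤ n := by exact_mod_cast hle
  set u : ℝ := ((n : ℝ) / A.card) ^ ((1 : ℝ) / 4) with hu
  have hq1 : 1 ≤ (n : ℝ) / A.card := by rw [le_div_iff₀ ha0]; linarith
  have hu1 : 1 ≤ u := Real.one_le_rpow hq1 (by norm_num)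
  have hu4 : u ^ 4 = (n : ℝ) / A.card := by
    rw [hu, ← Real.rpow_natCast, ← Real.rpow_mul (by linarith)]; norm_num
  have hub : (n : ℝ) = u ^ 4 * A.card := by rw [hu4]; field_simp
  have hpa : (A.card : ℝ) ^ 3 * u ≤ (p : ℝ) ^ 2 := by
    have h4 : ((A.card : ℝ) ^ 3 * u) ^ 4 ≤ ((p : ℝ) ^ 2) ^ 4 := by
      calc ((A.card : ℝ) ^ 3 * u) ^ 4 = (A.card : ℝ) ^ 11 * (u ^ 4 * A.card) := by ring
        _ = (A.card : ℝ) ^ 11 * n := by rw [← hub]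
        _ ≤ _ := hc
        _ = _ := by ring
    exact le_of_pow_le_pow_left₀ (by norm_num) (by positivity) h4
  have h1 := energy_le p hp A h0 T hT
  have h3 := sum_cubes p hp A h0 u hu1 (by rw [← hub, hn]) hpa
  have h1r : (T.card : ℝ) ≤ ∑ m : ZMod p, ((RR A m).card : ℝ) ^ 3 := by exact_mod_cast h1
  have hM : u ^ 15 * (A.card : ℝ) ^ 3 = (n : ℝ) ^ ((15 : ℝ) / 4) * (A.card : ℝ) ^ (-(3 : ℝ) / 4) := by
    have e1 : u ^ 15 = (n : ℝ) ^ ((15 : ℝ) / 4) / (A.card : ℝ) ^ ((15 : ℝ) / 4) := by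
      rw [hu, ← Real.rpow_natCast, ← Real.rpow_mul (by linarith), ← Real.div_rpow hn0.le ha0.le]; norm_num
    rw [e1, div_mul_eq_mul_div, mul_div_assoc, ← Real.rpow_natCast (A.card : ℝ) 3, ← Real.rpow_sub ha0]
    norm_num
  have hlog : 0.69 ≤ Real.log A.card := by
    have : Real.log 2 ≤ Real.log A.card := Real.log_le_log (by norm_num) (by exact_mod_cast h2)
    linarith [Real.log_two_gt_d9]
  have hM0 : 0 ≤ u ^ 15 * (A.card : ℝ) ^ 3 :=
    mul_nonneg (pow_nonneg (by linarith) _) (pow_nonneg ha0.le _)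
  calc (T.card : ℝ) ≤ _ := h1r
    _ ≤ _ := h3
    _ ≤ (u ^ 15 * (A.card : ℝ) ^ 3) * (10 ^ 45 * Real.log A.card) := by
        refine mul_le_mul_of_nonneg_left ?_ hM0
        exact num_fin _ hlog
    _ = _ := by rw [hM]; ring

end App4

theorem stmt_16 :
    ∃ C : ℝ, 0 < C ∧
      ∀ (p : ℕ), p.Prime →
        ∀ A : Finset (ZMod p), (0 : ZMod p) ∉ A → 2 ≤ A.card →
          (A.card : ℝ) ^ 11 * ((A + A).card : ℝ) ≤ (p : ℝ) ^ 8 →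
          (((A ×ˢ A ×ˢ A ×ˢ A ×ˢ A ×ˢ A).filter
              (fun t : ZMod p × ZMod p × ZMod p × ZMod p × ZMod p × ZMod p =>
                t.1 * t.2.2.2.2.1 = t.2.1 * t.2.2.2.1 ∧
                t.2.1 * t.2.2.2.2.2 = t.2.2.1 * t.2.2.2.2.1)).card : ℝ)
            ≤ C * ((A + A).card : ℝ) ^ ((15 : ℝ) / 4) * (A.card : ℝ) ^ (-(3 : ℝ) / 4) *
                Real.log A.card := by
  refine ⟨10 ^ 45, by positivity, ?_⟩
  intro p hp A h0 h2 hc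
  refine final_bound p hp A h0 h2 _ ?_ hc _ ?_
  · congr!
  · intro t ht
    exact ⟨(Finset.mem_filter.mp ht).1, (Finset.mem_filter.mp ht).2⟩
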